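/- arXiv:2601.15843 — 10 statements merged into one kernel-verified Lean document; each statement's English description precedes it below -/
import Mathlib

section
/- Let A be a unital C*-algebra over ℂ. Then A is weakly central if and only if, for every maximal ideal M of the center Z(A) (i.e. every maximal ideal of the commutative unital C*-algebra Z(A)), the closed two-sided ideal of A generated by M is contained in exactly one maximal closed two-sided ideal of A. -/
/- Basic notions about (closed) two-sided ideals of a topological ring,
   weak centrality, and closed ideals generated by a set. -/

section Defs
variable {R : Type*}

/-- A two-sided ring ideal, as a subset of `R`. -/
def IsIdealSet [NonUnitalNonAssocRing R] (S : Set R) : Prop :=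
  (0 : R) ∈ S ∧ (∀ x ∈ S, ∀ y ∈ S, x + y ∈ S) ∧ (∀ x ∈ S, -x ∈ S) ∧
    ∀ x ∈ S, ∀ a : R, a * x ∈ S ∧ x * a ∈ S

/-- A closed two-sided ideal of a topological ring. -/
def IsClosedIdealSet [NonUnitalNonAssocRing R] [TopologicalSpace R] (S : Set R) : Prop :=
  IsIdealSet S ∧ IsClosed S

/-- A maximal (proper) closed two-sided ideal of a topological ring. -/
def IsMaxClosedIdealSet [NonUnitalNonAssocRing R] [TopologicalSpace R] (S : Set R) : Prop :=
  IsClosedIdealSet S ∧ S ≠ Set.univ ∧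
    ∀ T : Set R, IsClosedIdealSet T → S ⊆ T → T = S ∨ T = Set.univ

/-- A maximal (proper) two-sided ideal (no closedness requirement). -/
def IsMaxIdealSet [NonUnitalNonAssocRing R] (S : Set R) : Prop :=
  IsIdealSet S ∧ S ≠ Set.univ ∧
    ∀ T : Set R, IsIdealSet T → S ⊆ T → T = S ∨ T = Set.univ

/-- The center of `R`, as a set. -/
def centerSet (R : Type*) [Mul R] : Set R := {z : R | ∀ a : R, z * a = a * z}

/-- A topological ring is weakly central if no maximal closed two-sided ideal contains the
center, and the map `M ↦ M ∩ Z(R)` is injective on maximal closed two-sided ideals. -/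
def WeaklyCentral (R : Type*) [NonUnitalNonAssocRing R] [TopologicalSpace R] : Prop :=
  (∀ M : Set R, IsMaxClosedIdealSet M → ¬ centerSet R ⊆ M) ∧
    ∀ M N : Set R, IsMaxClosedIdealSet M → IsMaxClosedIdealSet N →
      M ∩ centerSet R = N ∩ centerSet R → M = N

/-- The closed two-sided ideal generated by a set `S`. -/
def closedIdealGen [NonUnitalNonAssocRing R] [TopologicalSpace R] (S : Set R) : Set R :=
  ⋂₀ {T : Set R | IsClosedIdealSet T ∧ S ⊆ T}

end Defs

section Aux

variable {A : Type*} [CStarAlgebra A]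

lemma aux_star_central {z : A} (hz : z ∈ centerSet A) : star z ∈ centerSet A := by
  intro a
  have := congrArg star (hz (star a))
  simpa using this.symm

lemma aux_mul_central {z w : A} (hz : z ∈ centerSet A) (hw : w ∈ centerSet A) :
    z * w ∈ centerSet A := by
  intro a
  rw [mul_assoc, hw a, ← mul_assoc, hz a, mul_assoc]

lemma aux_cfc_central {h : A} (hh : h ∈ centerSet A) (f : ℝ → ℝ) : cfc f h ∈ centerSet A :=
  fun a => (Commute.cfc_real (show Commute h a from hh a) f)

lemma aux_bump {z : A} (hz : z ∈ centerSet A) {δ : ℝ} (hδ : 0 < δ) :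
    ∃ k e x : A, k ∈ centerSet A ∧ e ∈ centerSet A ∧ x ∈ centerSet A ∧
      1 - e = star z * z * k ∧ ‖e‖ ≤ 1 ∧ ‖e * z‖ ^ 2 ≤ δ ∧ x * e = 0 ∧
      ‖star z * z - x‖ ≤ δ := by
  have hh : star z * z ∈ centerSet A := aux_mul_central (aux_star_central hz) hz
  have hsa : IsSelfAdjoint (star z * z) := IsSelfAdjoint.star_mul_self z
  have hsp : ∀ t ∈ spectrum ℝ (star z * z), 0 ≤ t := fun t ht =>
    spectrum_star_mul_self_nonneg t ht
  have hm : ∀ t : ℝ, max t δ ≠ 0 := fun t => (lt_of_lt_of_le hδ (le_max_right _ _)).ne'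
  have ck : Continuous (fun t : ℝ => 1 / max t δ) :=
    continuous_const.div (continuous_id.max continuous_const) hm
  have ce : Continuous (fun t : ℝ => max (1 - t / δ) 0) := by fun_prop
  have cx : Continuous (fun t : ℝ => max (t - δ) 0) := by fun_prop
  have hb : ∀ t : ℝ, 0 ≤ t → max (1 - t / δ) 0 ≤ 1 := by
    intro t ht
    have := div_nonneg ht hδ.le
    exact max_le (by linarith) zero_le_one
  refine ⟨cfc (fun t : ℝ => 1 / max t δ) (star z * z), cfc (fun t : ℝ => max (1 - t / δ) 0) (star z * z),
    cfc (fun t : ℝ => max (t - δ) 0) (star z * z), aux_cfc_central hh _, aux_cfc_central hh _,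
    aux_cfc_central hh _, ?_, ?_, ?_, ?_, ?_⟩
  · conv_rhs => rw [← cfc_id' ℝ (star z * z), cfc_id' ℝ (star z * z)]
    have h1 : star z * z * cfc (fun t : ℝ => 1 / max t δ) (star z * z)
        = cfc (fun t : ℝ => t * (1 / max t δ)) (star z * z) := by
      rw [cfc_mul (fun t : ℝ => t) (fun t : ℝ => 1 / max t δ) (star z * z) (by fun_prop) ck.continuousOn,
        cfc_id' ℝ (star z * z)]
    have h2 : (1 : A) = cfc (fun _ : ℝ => (1 : ℝ)) (star z * z) := (cfc_const_one ℝ _).symm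
    rw [h1]
    conv_lhs => rw [h2]
    rw [← cfc_sub _ _ _ (by fun_prop) ce.continuousOn]
    apply cfc_congr
    intro t ht
    have ht := hsp t ht
    simp only
    rcases le_total t δ with h | h
    · rw [max_eq_right h, max_eq_left (by rw [sub_nonneg, div_le_one hδ]; exact h)]
      field_simp
      ring
    · rw [max_eq_left h, max_eq_right (by rw [sub_nonpos, one_le_div hδ]; exact h)]
      have : t ≠ 0 := (lt_of_lt_of_le hδ h).ne'
      field_simp
      ring
  · apply norm_cfc_le zero_le_one
    intro t ht
    rw [Real.norm_of_nonneg (le_max_right _ _)]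
    exact hb t (hsp t ht)
  · set e := cfc (fun t : ℝ => max (1 - t / δ) 0) (star z * z) with he
    have hec : e ∈ centerSet A := aux_cfc_central hh _
    have hes : star e = e := (cfc_predicate (p := IsSelfAdjoint) _ (star z * z) : IsSelfAdjoint e)
    have h1 : star (e * z) * (e * z) = e * e * (star z * z) := by
      rw [star_mul, hes, hec z, ← mul_assoc, mul_assoc (star z) e z, hec z, ← mul_assoc,
        mul_assoc _ e e, ← aux_mul_central hec hec]
    rw [pow_two, ← CStarRing.norm_star_mul_self, h1]
    have h2 : e * e * (star z * z) = cfc (fun t : ℝ =>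
        max (1 - t / δ) 0 * max (1 - t / δ) 0 * t) (star z * z) := by
      rw [cfc_mul (fun t : ℝ => max (1 - t / δ) 0 * max (1 - t / δ) 0) (fun t => t) _
        (ce.mul ce).continuousOn (by fun_prop), cfc_mul _ _ _ ce.continuousOn ce.continuousOn,
        cfc_id' ℝ (star z * z)]
    rw [h2]
    apply norm_cfc_le hδ.le
    intro t ht
    have ht := hsp t ht
    rw [Real.norm_of_nonneg (by positivity)]
    have h3 := hb t ht
    have h0 : 0 ≤ max (1 - t / δ) 0 := le_max_right _ _
    rcases le_total t δ with h | h
    · calc _ ≤ 1 * 1 * t := by gcongr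
        _ ≤ δ := by linarith
    · rw [max_eq_right (by rw [sub_nonpos, one_le_div hδ]; exact h)]
      simpa using hδ.le
  · rw [← cfc_mul _ _ _ cx.continuousOn ce.continuousOn, ← cfc_const_zero ℝ (star z * z)]
    apply cfc_congr
    intro t ht
    simp only
    rcases le_total t δ with h | h
    · rw [max_eq_right (by linarith), zero_mul]
    · rw [max_eq_right (a := 1 - t / δ) (by rw [sub_nonpos, one_le_div hδ]; exact h), mul_zero]
  · have h1 : star z * z - cfc (fun t : ℝ => max (t - δ) 0) (star z * z)
        = cfc (fun t : ℝ => t - max (t - δ) 0) (star z * z) := by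
      rw [cfc_sub (fun t : ℝ => t) (fun t : ℝ => max (t - δ) 0) (star z * z) (by fun_prop) cx.continuousOn,
        cfc_id' ℝ (star z * z)]
    rw [h1]
    apply norm_cfc_le hδ.le
    intro t ht
    have ht := hsp t ht
    rw [Real.norm_eq_abs, abs_le]
    rcases le_total t δ with h | h
    · rw [max_eq_right (by linarith)]; constructor <;> linarith
    · rw [max_eq_left (by linarith)]; constructor <;> linarith

lemma aux_univ {S : Set A} (hS : IsIdealSet S) (h1 : (1 : A) ∈ S) : S = Set.univ := by
  ext a
  simpa using (hS.2.2.2 1 h1 a).1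

lemma aux_one_notMem {S : Set A} (hS : IsIdealSet S) (h1 : S ≠ Set.univ) : (1 : A) ∉ S :=
  fun h => h1 (aux_univ hS h)

lemma aux_closure {S : Set A} (hS : IsIdealSet S) : IsClosedIdealSet (closure S) := by
  refine ⟨⟨subset_closure hS.1, ?_, ?_, ?_⟩, isClosed_closure⟩
  · intro x hx y hy
    exact map_mem_closure₂ continuous_add hx hy (fun a ha b hb => hS.2.1 a ha b hb)
  · intro x hx
    exact map_mem_closure continuous_neg hx (fun a ha => hS.2.2.1 a ha)
  · intro x hx a
    exact ⟨map_mem_closure (continuous_const_mul a) hx (fun b hb => (hS.2.2.2 b hb a).1),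
      map_mem_closure (f := fun x => x * a) (continuous_mul_const a) hx (fun b hb => (hS.2.2.2 b hb a).2)⟩

lemma aux_one_notMem_closure {S : Set A} (hS : IsIdealSet S) (h1 : (1 : A) ∉ S) :
    (1 : A) ∉ closure S := by
  intro h
  obtain ⟨b, hb, hd⟩ := Metric.mem_closure_iff.1 h 1 one_pos
  rw [dist_eq_norm] at hd
  have hu : IsUnit b := by simpa using isUnit_one_sub_of_norm_lt_one hd
  obtain ⟨u, rfl⟩ := hu
  apply h1
  simpa using (hS.2.2.2 _ hb (↑u⁻¹ : A)).1

lemma aux_exists_max {S : Set A} (hS : IsIdealSet S) (h1 : (1 : A) ∉ S) :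
    ∃ N, IsMaxClosedIdealSet N ∧ S ⊆ N := by
  obtain ⟨N, hSN, hN⟩ := zorn_subset_nonempty {T : Set A | IsIdealSet T ∧ (1 : A) ∉ T} (by
    intro c hc hch hne
    refine ⟨⋃₀ c, ⟨⟨?_, ?_, ?_, ?_⟩, ?_⟩, fun s hs => Set.subset_sUnion_of_mem hs⟩
    · obtain ⟨s, hs⟩ := hne
      exact ⟨s, hs, (hc hs).1.1⟩
    · rintro x ⟨s, hs, hx⟩ y ⟨t, ht, hy⟩
      rcases hch.total hs ht with h | h
      · exact ⟨t, ht, (hc ht).1.2.1 x (h hx) y hy⟩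
      · exact ⟨s, hs, (hc hs).1.2.1 x hx y (h hy)⟩
    · rintro x ⟨s, hs, hx⟩
      exact ⟨s, hs, (hc hs).1.2.2.1 x hx⟩
    · rintro x ⟨s, hs, hx⟩ a
      exact ⟨⟨s, hs, ((hc hs).1.2.2.2 x hx a).1⟩, ⟨s, hs, ((hc hs).1.2.2.2 x hx a).2⟩⟩
    · rintro ⟨s, hs, hx⟩
      exact (hc hs).2 hx) S ⟨hS, h1⟩
  have hcl : closure N ⊆ N :=
    hN.le_of_ge ⟨(aux_closure hN.prop.1).1, aux_one_notMem_closure hN.prop.1 hN.prop.2⟩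
      subset_closure
  refine ⟨N, ⟨⟨hN.prop.1, isClosed_of_closure_subset hcl⟩, ?_, ?_⟩, hSN⟩
  · intro h
    exact hN.prop.2 (h ▸ Set.mem_univ _)
  · intro T hT hNT
    by_cases h : (1 : A) ∈ T
    · exact Or.inr (aux_univ hT.1 h)
    · exact Or.inl (Set.Subset.antisymm (hN.le_of_ge ⟨hT.1, h⟩ hNT) hNT)

/-- Central primeness of maximal closed ideals. -/
lemma aux_prime {N : Set A} (hN : IsMaxClosedIdealSet N) {z w : A} (hz : z ∈ centerSet A)
    (hw : w ∈ centerSet A) (hzw : z * w ∈ N) (hzN : z ∉ N) : w ∈ N := by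
  have hI := hN.1.1
  have hT : IsIdealSet {x : A | w * x ∈ N} := by
    refine ⟨by simpa using hI.1, ?_, ?_, ?_⟩
    · intro x hx y hy
      simpa [mul_add] using hI.2.1 _ hx _ hy
    · intro x hx
      simpa using hI.2.2.1 _ hx
    · intro x hx a
      refine ⟨?_, ?_⟩
      · show w * (a * x) ∈ N
        rw [← mul_assoc, hw a, mul_assoc]
        exact (hI.2.2.2 _ hx a).1
      · show w * (x * a) ∈ N
        rw [← mul_assoc]
        exact (hI.2.2.2 _ hx a).2
  have hTc : IsClosed {x : A | w * x ∈ N} := hN.1.2.preimage (continuous_const_mul w)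
  rcases hN.2.2 _ ⟨hT, hTc⟩ (fun x hx => (hI.2.2.2 x hx w).1) with h | h
  · exact absurd (h ▸ (show z ∈ {x : A | w * x ∈ N} by
      show w * z ∈ N
      rwa [hw z])) hzN
  · have : (1 : A) ∈ {x : A | w * x ∈ N} := h ▸ Set.mem_univ _
    simpa using this

lemma aux_star_mul_mem {N : Set A} (hN : IsClosedIdealSet N) {z : A} (hz : z ∈ centerSet A)
    (h : star z * z ∈ N) : z ∈ N := by
  rw [← hN.2.closure_eq, Metric.mem_closure_iff]
  intro ε hε
  obtain ⟨k, e, x, -, -, -, h1, -, h2, -, -⟩ := aux_bump hz (δ := (ε / 2) ^ 2) (by positivity)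
  refine ⟨(1 - e) * z, ?_, ?_⟩
  · rw [h1]
    exact (hN.1.2.2.2 _ (hN.1.2.2.2 _ h k).2 z).2
  · rw [dist_eq_norm, sub_mul, one_mul, sub_sub_cancel]
    have := (abs_le_of_sq_le_sq' h2 (by positivity)).2
    linarith

lemma aux_mem_center {z : A} : z ∈ centerSet A ↔ z ∈ Subalgebra.center ℂ A := by
  rw [Subalgebra.mem_center_iff]
  exact ⟨fun h b => (h b).symm, fun h b => (h b).symm⟩

/-- If a maximal ideal of the center contains `N ∩ Z`, it lies in `N`. -/
lemma aux_max_subset {N : Set A} (hN : IsMaxClosedIdealSet N)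
    (M : Ideal (Subalgebra.center ℂ A)) (hM : M ≠ ⊤)
    (h : ∀ w : Subalgebra.center ℂ A, (w : A) ∈ N → w ∈ M)
    (z : Subalgebra.center ℂ A) (hz : z ∈ M) : (z : A) ∈ N := by
  have hzc : (z : A) ∈ centerSet A := aux_mem_center.2 z.2
  apply aux_star_mul_mem hN.1 hzc
  rw [← hN.1.2.closure_eq, Metric.mem_closure_iff]
  intro ε hε
  obtain ⟨k, e, x, hk, he, hx, h1, -, -, h2, h3⟩ := aux_bump hzc (δ := ε / 2) (by positivity)
  refine ⟨x, ?_, ?_⟩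
  · by_contra hxN
    have heN : e ∈ N := aux_prime hN hx he (by rw [h2]; exact hN.1.1.1) hxN
    have heM := h ⟨e, aux_mem_center.1 he⟩ heN
    apply hM
    rw [Ideal.eq_top_iff_one]
    have : (1 : Subalgebra.center ℂ A) = ⟨e, aux_mem_center.1 he⟩ +
        ⟨star (z : A), aux_mem_center.1 (aux_star_central hzc)⟩ * z *
          ⟨k, aux_mem_center.1 hk⟩ := by
      apply Subtype.ext
      show (1 : A) = e + star (z : A) * z * k
      rw [← h1]; abel
    rw [this]
    exact M.add_mem heM (M.mul_mem_right _ (M.mul_mem_left _ hz))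
  · rw [dist_eq_norm]; linarith

/-- A proper ideal of the center is contained in a proper ideal of `A`. -/
lemma aux_gen_proper (M : Ideal (Subalgebra.center ℂ A)) (hM : M ≠ ⊤) :
    ∃ J : Set A, IsIdealSet J ∧ (1 : A) ∉ J ∧ ∀ z ∈ M, (z : A) ∈ J := by
  refine ⟨{a | ∀ ε > 0, ∃ e : Subalgebra.center ℂ A, 1 - e ∈ M ∧ ‖(e : A)‖ ≤ 1 ∧
    ‖(e : A) * a‖ ≤ ε}, ⟨?_, ?_, ?_, ?_⟩, ?_, ?_⟩
  · intro ε hε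
    obtain ⟨k, e, x, hk, he, hx, h1, h2, -⟩ :=
      aux_bump (A := A) (z := 0) (fun a => by simp) (δ := ε) hε
    refine ⟨⟨e, aux_mem_center.1 he⟩, ?_, h2, by simpa using hε.le⟩
    convert M.zero_mem
    apply Subtype.ext
    show 1 - e = 0
    simpa using h1
  · intro x hx y hy ε hε
    obtain ⟨e, he, hn, hs⟩ := hx (ε / 2) (by positivity)
    obtain ⟨f, hf, hn', hs'⟩ := hy (ε / 2) (by positivity)
    refine ⟨e * f, ?_, ?_, ?_⟩
    · have : 1 - e * f = (1 - e) + e * (1 - f) := by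
        apply Subtype.ext
        show (1 : A) - (e : A) * (f : A) = (1 - (e : A)) + (e : A) * (1 - (f : A))
        noncomm_ring
      rw [this]
      exact M.add_mem he (M.mul_mem_left _ hf)
    · exact (norm_mul_le _ _).trans (mul_le_one₀ hn (norm_nonneg _) hn')
    · have h1 : ((e * f : Subalgebra.center ℂ A) : A) * (x + y)
          = (f : A) * ((e : A) * x) + (e : A) * ((f : A) * y) := by
        rw [mul_add, ← mul_assoc, ← mul_assoc, aux_mem_center.2 f.2 e]
        rfl
      rw [h1]
      calc _ ≤ ‖(f : A)‖ * ‖(e : A) * x‖ + ‖(e : A)‖ * ‖(f : A) * y‖ :=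
            (norm_add_le _ _).trans (add_le_add (norm_mul_le _ _) (norm_mul_le _ _))
        _ ≤ 1 * (ε / 2) + 1 * (ε / 2) := by gcongr
        _ = ε := by ring
  · intro x hx ε hε
    simpa using hx ε hε
  · intro x hx a
    have key : ∀ ε > 0, ∃ e : Subalgebra.center ℂ A, 1 - e ∈ M ∧ ‖(e : A)‖ ≤ 1 ∧
        ‖(e : A) * x‖ * ‖a‖ ≤ ε := by
      intro ε hε
      obtain ⟨e, he, hn, hs⟩ := hx (ε / (‖a‖ + 1)) (by positivity)
      refine ⟨e, he, hn, ?_⟩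
      calc _ ≤ ε / (‖a‖ + 1) * (‖a‖ + 1) := by gcongr; linarith
        _ = ε := by field_simp
    constructor
    · intro ε hε
      obtain ⟨e, he, hn, hs⟩ := key ε hε
      refine ⟨e, he, hn, ?_⟩
      rw [← mul_assoc, aux_mem_center.2 e.2 a, mul_assoc]
      exact (norm_mul_le _ _).trans (by rwa [mul_comm])
    · intro ε hε
      obtain ⟨e, he, hn, hs⟩ := key ε hε
      refine ⟨e, he, hn, ?_⟩
      rw [← mul_assoc]
      exact (norm_mul_le _ _).trans hs
  · intro h
    obtain ⟨e, he, -, hs⟩ := h (1 / 2) (by norm_num)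
    rw [mul_one] at hs
    obtain ⟨u, hu⟩ := isUnit_one_sub_of_norm_lt_one (x := (e : A)) (by linarith)
    have huc : (u : A) ∈ centerSet A := by
      rw [hu]; exact aux_mem_center.2 (1 - e).2
    have hic : (↑u⁻¹ : A) ∈ centerSet A := by
      intro a
      exact (Commute.units_inv_left (show Commute (u : A) a from huc a))
    apply hM
    rw [Ideal.eq_top_iff_one]
    have : (1 : Subalgebra.center ℂ A) = ⟨(↑u⁻¹ : A), aux_mem_center.1 hic⟩ * (1 - e) := by
      apply Subtype.ext
      show (1 : A) = ↑u⁻¹ * (1 - (e : A))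
      rw [← hu]; simp
    rw [this]
    exact M.mul_mem_left _ he
  · intro z hz ε hε
    have hzc : (z : A) ∈ centerSet A := aux_mem_center.2 z.2
    obtain ⟨k, e, x, hk, he, hx, h1, h2, h3, -⟩ := aux_bump hzc (δ := ε ^ 2) (by positivity)
    refine ⟨⟨e, aux_mem_center.1 he⟩, ?_, h2, (abs_le_of_sq_le_sq' h3 hε.le).2⟩
    have : 1 - (⟨e, aux_mem_center.1 he⟩ : Subalgebra.center ℂ A) =
        ⟨star (z : A), aux_mem_center.1 (aux_star_central hzc)⟩ * z *
          ⟨k, aux_mem_center.1 hk⟩ := by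
      apply Subtype.ext
      exact h1
    rw [this]
    exact M.mul_mem_right _ (M.mul_mem_left _ hz)

lemma aux_gen_subset_iff {N : Set A} (hN : IsMaxClosedIdealSet N)
    (M : Ideal (Subalgebra.center ℂ A)) :
    closedIdealGen ((fun z : Subalgebra.center ℂ A => (z : A)) ''
      (M : Set (Subalgebra.center ℂ A))) ⊆ N ↔ ∀ z ∈ M, (z : A) ∈ N := by
  constructor
  · intro h z hz
    exact h (fun T hT => hT.2 ⟨z, hz, rfl⟩)
  · intro h
    apply Set.sInter_subset_of_mem
    refine ⟨hN.1, ?_⟩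
    rintro _ ⟨z, hz, rfl⟩
    exact h z hz

/-- The trace of an ideal set on the center. -/
def auxTrace {N : Set A} (hN : IsIdealSet N) : Ideal (Subalgebra.center ℂ A) where
  carrier := {z | (z : A) ∈ N}
  zero_mem' := hN.1
  add_mem' := fun {x y} hx hy => hN.2.1 x hx y hy
  smul_mem' := fun c x hx => (hN.2.2.2 x hx c).1

lemma aux_trace_ne_top {N : Set A} (hN : IsIdealSet N) (h : (1 : A) ∉ N) :
    auxTrace hN ≠ ⊤ := by
  rw [Ne, Ideal.eq_top_iff_one]
  exact h

lemma aux_main : WeaklyCentral A ↔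
      ∀ M : Ideal (Subalgebra.center ℂ A), M.IsMaximal →
        ∃! N : Set A, IsMaxClosedIdealSet N ∧
          closedIdealGen ((fun z : Subalgebra.center ℂ A => (z : A)) ''
            (M : Set (Subalgebra.center ℂ A))) ⊆ N := by
  constructor
  · intro hW M hM
    obtain ⟨J, hJ, hJ1, hMJ⟩ := aux_gen_proper M hM.ne_top
    obtain ⟨N, hN, hJN⟩ := aux_exists_max hJ hJ1
    have hMN : ∀ z ∈ M, (z : A) ∈ N := fun z hz => hJN (hMJ z hz)
    refine ⟨N, ⟨hN, (aux_gen_subset_iff hN M).2 hMN⟩, ?_⟩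
    rintro N' ⟨hN', hg⟩
    have hMN' := (aux_gen_subset_iff hN' M).1 hg
    have tr : ∀ K : Set A, IsMaxClosedIdealSet K → (∀ z ∈ M, (z : A) ∈ K) →
        K ∩ centerSet A = (fun z : Subalgebra.center ℂ A => (z : A)) '' (M : Set _) := by
      intro K hK h
      have heq : M = auxTrace hK.1.1 :=
        hM.eq_of_le (aux_trace_ne_top hK.1.1 (aux_one_notMem hK.1.1 hK.2.1)) h
      ext a
      constructor
      · rintro ⟨ha, hc⟩
        refine ⟨⟨a, aux_mem_center.1 hc⟩, ?_, rfl⟩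
        rw [heq]
        exact ha
      · rintro ⟨z, hz, rfl⟩
        exact ⟨h z hz, aux_mem_center.2 z.2⟩
    exact hW.2 N' N hN' hN ((tr N' hN' hMN').trans (tr N hN hMN).symm)
  · intro H
    refine ⟨fun M hM hc => aux_one_notMem hM.1.1 hM.2.1 (hc (fun a => by simp)), ?_⟩
    intro N N' hN hN' heq
    obtain ⟨M, hM, hle⟩ := Ideal.exists_le_maximal (auxTrace hN.1.1)
      (aux_trace_ne_top hN.1.1 (aux_one_notMem hN.1.1 hN.2.1))
    refine (H M hM).unique ⟨hN, (aux_gen_subset_iff hN M).2 ?_⟩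
      ⟨hN', (aux_gen_subset_iff hN' M).2 ?_⟩
    · exact aux_max_subset hN M hM.ne_top (fun w hw => hle hw)
    · refine aux_max_subset hN' M hM.ne_top (fun w hw => hle ?_)
      have : (w : A) ∈ N ∩ centerSet A := heq ▸ ⟨hw, aux_mem_center.2 w.2⟩
      exact this.1

end Aux

/-- **Characterization of weak centrality via maximal ideals of the center.**
A unital C*-algebra `A` is weakly central iff for every maximal ideal `M` of its center
`Z(A)`, the closed two-sided ideal of `A` generated by `M` is contained in exactly one
maximal closed two-sided ideal of `A`. -/
theorem weaklyCentral_iff_ideal_of_central_maximal_in_unique_maximal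
    {A : Type*} [NormedRing A] [StarRing A] [CStarRing A]
    [NormedAlgebra ℂ A] [StarModule ℂ A] [CompleteSpace A] :
    WeaklyCentral A ↔
      ∀ M : Ideal (Subalgebra.center ℂ A), M.IsMaximal →
        ∃! N : Set A, IsMaxClosedIdealSet N ∧
          closedIdealGen ((fun z : Subalgebra.center ℂ A => (z : A)) ''
            (M : Set (Subalgebra.center ℂ A))) ⊆ N := by
  letI : CStarAlgebra A := {}
  exact aux_main
end

section
/- Let X be a compact Hausdorff space and let A be a unital C(X)-algebra whose structure map Φ : C(X,ℂ) → Z(A) satisfies Φ(C(X,ℂ)) = Z(A). Then A is weakly central if and only if for every x ∈ X with I_x ≠ A, the fiber A(x) = A/I_x has exactly one maximal (closed) two-sided ideal. -/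
theorem aux_prime_s2 {A : Type*} [NormedRing A] {M : Set A} (hM : IsMaxClosedIdealSet M)
    {z w : A} (hw : w ∈ centerSet A) (h : z * w ∈ M) : z ∈ M ∨ w ∈ M := by
  by_cases hwM : w ∈ M
  · exact Or.inr hwM
  left
  obtain ⟨⟨⟨h0, hadd, hneg, hmul⟩, hcl⟩, hne, hmax⟩ := hM
  have key := hmax {t | t * w ∈ M} ?_ ?_
  · rcases key with k | k
    · have : z ∈ {t | t * w ∈ M} := h
      rwa [k] at this
    · exfalso
      have : (1 : A) ∈ {t | t * w ∈ M} := by rw [k]; trivial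
      apply hwM
      simpa using this
  · refine ⟨⟨?_, ?_, ?_, ?_⟩, ?_⟩
    · simpa using h0
    · intro x hx y hy
      simpa [add_mul] using hadd _ hx _ hy
    · intro x hx
      simpa using hneg _ hx
    · intro x hx a
      refine ⟨?_, ?_⟩
      · simpa [mul_assoc] using (hmul _ hx a).1
      · have := (hmul _ hx a).2
        rw [mul_assoc, hw a, ← mul_assoc] at this
        exact this
    · exact hcl.preimage (f := fun t : A => t * w) (by fun_prop)
  · intro m hm
    exact (hmul _ hm w).2

theorem aux_one {A : Type*} [NormedRing A] {M : Set A} (hM : IsIdealSet M)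
    (h : (1 : A) ∈ M) : M = Set.univ := by
  ext a
  simpa using (hM.2.2.2 1 h a).1

theorem aux_exists {A : Type*} [NormedRing A] [CompleteSpace A] {I : Set A}
    (hI : IsIdealSet I) (hne : I ≠ Set.univ) : ∃ N, IsMaxClosedIdealSet N ∧ I ⊆ N := by
  obtain ⟨N, hIN, hN⟩ := zorn_subset_nonempty {T : Set A | IsIdealSet T ∧ (1 : A) ∉ T} (by
    intro c hc hch ⟨t0, ht0⟩
    refine ⟨⋃₀ c, ⟨⟨⟨t0, ht0, (hc ht0).1.1⟩, ?_, ?_, ?_⟩, ?_⟩, fun s hs => Set.subset_sUnion_of_mem hs⟩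
    · rintro x ⟨s, hs, hx⟩ y ⟨t, ht, hy⟩
      rcases hch.total hs ht with h | h
      · exact ⟨t, ht, (hc ht).1.2.1 _ (h hx) _ hy⟩
      · exact ⟨s, hs, (hc hs).1.2.1 _ hx _ (h hy)⟩
    · rintro x ⟨s, hs, hx⟩
      exact ⟨s, hs, (hc hs).1.2.2.1 _ hx⟩
    · rintro x ⟨s, hs, hx⟩ a
      exact ⟨⟨s, hs, ((hc hs).1.2.2.2 _ hx a).1⟩, ⟨s, hs, ((hc hs).1.2.2.2 _ hx a).2⟩⟩
    · rintro ⟨s, hs, hx⟩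
      exact (hc hs).2 hx) I ⟨hI, fun h => hne (aux_one hI h)⟩
  obtain ⟨⟨hNi, hN1⟩, hNmax⟩ := hN
  have hcli : IsIdealSet (closure N) := by
    refine ⟨subset_closure hNi.1, ?_, ?_, ?_⟩
    · intro x hx y hy
      exact map_mem_closure₂ continuous_add hx hy hNi.2.1
    · intro x hx
      exact map_mem_closure continuous_neg hx hNi.2.2.1
    · intro x hx a
      exact ⟨map_mem_closure (continuous_const_mul a) hx fun y hy => (hNi.2.2.2 y hy a).1,
        map_mem_closure (f := fun y : A => y * a) (continuous_mul_const a) hx fun y hy => (hNi.2.2.2 y hy a).2⟩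
  have hcl1 : (1 : A) ∉ closure N := by
    intro h
    obtain ⟨t, ht, hd⟩ := Metric.mem_closure_iff.1 h 1 one_pos
    rw [dist_eq_norm] at hd
    obtain ⟨u, hu⟩ : ∃ u : Aˣ, t = (u : A) := ⟨Units.oneSub (1 - t) hd, by simp⟩
    apply hN1
    have := (hNi.2.2.2 t ht ((u⁻¹ : Aˣ) : A)).1
    rw [hu] at this
    simpa using this
  have hclosed : IsClosed N :=
    isClosed_of_closure_subset (hNmax ⟨hcli, hcl1⟩ subset_closure)
  refine ⟨N, ⟨⟨hNi, hclosed⟩, fun h => hN1 (h ▸ trivial), ?_⟩, hIN⟩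
  intro T hT hNT
  by_cases h1 : (1 : A) ∈ T
  · exact Or.inr (aux_one hT.1 h1)
  · exact Or.inl ((hNmax ⟨hT.1, h1⟩ hNT).antisymm hNT)

theorem aux_gen_ideal {A : Type*} [NormedRing A] (S : Set A) :
    IsIdealSet (closedIdealGen S) := by
  refine ⟨fun T hT => hT.1.1.1, ?_, ?_, ?_⟩
  · intro x hx y hy T hT
    exact hT.1.1.2.1 _ (hx T hT) _ (hy T hT)
  · intro x hx T hT
    exact hT.1.1.2.2.1 _ (hx T hT)
  · intro x hx a
    exact ⟨fun T hT => (hT.1.1.2.2.2 _ (hx T hT) a).1, fun T hT => (hT.1.1.2.2.2 _ (hx T hT) a).2⟩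

theorem aux_point
    {X A : Type*} [TopologicalSpace X] [CompactSpace X] [T2Space X]
    [NormedRing A] [StarRing A] [CStarRing A]
    [NormedAlgebra ℂ A] [StarModule ℂ A] [CompleteSpace A]
    (Φ : C(X, ℂ) →⋆ₐ[ℂ] A)
    (hΦ : Set.range ⇑Φ = centerSet A) {M : Set A} (hM : IsMaxClosedIdealSet M) :
    ∃ x : X, ∀ f : C(X, ℂ), Φ f ∈ M ↔ f x = 0 := by
  have hcont : Continuous Φ := by
    let _ : CStarAlgebra A := {}
    exact AddMonoidHomClass.continuous_of_bound Φ 1 fun f => by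
      simpa using NonUnitalStarAlgHom.norm_apply_le Φ f
  let P : Ideal C(X, ℂ) :=
    { carrier := {f | Φ f ∈ M}
      zero_mem' := by simpa using hM.1.1.1
      add_mem' := fun {f g} hf hg => by
        simpa using hM.1.1.2.1 _ hf _ hg
      smul_mem' := fun c f hf => by
        simpa using (hM.1.1.2.2.2 _ hf (Φ c)).1 }
  have hPmem : ∀ f, f ∈ P ↔ Φ f ∈ M := fun f => Iff.rfl
  have hPcl : IsClosed (P : Set C(X, ℂ)) := hM.1.2.preimage hcont
  have hP := ContinuousMap.idealOfSet_ofIdeal_isClosed hPcl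
  have h1 : (1 : C(X, ℂ)) ∉ P := by
    rw [hPmem, map_one]
    exact fun h => hM.2.1 (aux_one hM.1.1 h)
  have hx : ∃ x, x ∉ ContinuousMap.setOfIdeal P := by
    by_contra! hall
    apply h1
    rw [← hP, ContinuousMap.mem_idealOfSet]
    intro x hx
    exact absurd (hall x) hx
  obtain ⟨x, hx⟩ := hx
  refine ⟨x, fun f => ⟨fun hf => ContinuousMap.notMem_setOfIdeal.1 hx hf, fun hf => ?_⟩⟩
  rw [← hPmem, ← hP, ContinuousMap.mem_idealOfSet]
  intro y hy
  by_cases hxy : y = x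
  · rw [hxy, hf]
  exfalso
  obtain ⟨b, hb0, hb1, -⟩ := exists_continuous_zero_one_of_isClosed
    (isClosed_singleton (x := x)) (isClosed_singleton (x := y)) (by simpa using Ne.symm hxy)
  have hbx : b x = 0 := hb0 rfl
  have hby : b y = 1 := hb1 rfl
  let g : C(X, ℂ) := ⟨fun t => ((max (b t - 1/2) 0 : ℝ) : ℂ), by fun_prop⟩
  let h : C(X, ℂ) := ⟨fun t => ((max (1/2 - b t) 0 : ℝ) : ℂ), by fun_prop⟩
  have hgh : g * h = 0 := by
    ext t
    change ((max (b t - 1/2) 0 : ℝ) : ℂ) * ((max (1/2 - b t) 0 : ℝ) : ℂ) = 0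
    rcases le_total (b t) (1/2) with hle | hle
    · rw [max_eq_right (by linarith)]; simp
    · rw [max_eq_right (a := 1/2 - b t) (by linarith)]; simp
  have hmem : Φ g * Φ h ∈ M := by
    rw [← map_mul, hgh, map_zero]; exact hM.1.1.1
  rcases aux_prime_s2 hM (hΦ ▸ Set.mem_range_self h) hmem with k | k
  · have := ContinuousMap.notMem_setOfIdeal.1 hy (f := g) k
    have h2 : ((max (b y - 1/2) 0 : ℝ) : ℂ) = 0 := this
    rw [hby] at h2
    norm_num at h2
  · have := ContinuousMap.notMem_setOfIdeal.1 hx (f := h) k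
    have h2 : ((max (1/2 - b x) 0 : ℝ) : ℂ) = 0 := this
    rw [hbx] at h2
    norm_num at h2

theorem aux_sep {X : Type*} [TopologicalSpace X] [CompactSpace X] [T2Space X] {x y : X}
    (h : ∀ f : C(X, ℂ), f x = 0 → f y = 0) : x = y := by
  by_contra hxy
  obtain ⟨b, hb0, hb1, -⟩ := exists_continuous_zero_one_of_isClosed
    (isClosed_singleton (x := x)) (isClosed_singleton (x := y)) (by simpa using hxy)
  have hbx : b x = 0 := hb0 rfl
  have hby : b y = 1 := hb1 rfl
  have := h ⟨fun t => ((b t : ℝ) : ℂ), by fun_prop⟩ (by simp [hbx])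
  simp [hby] at this

/-- **Weak centrality of a `C(X)`-algebra via its fibers.**
Let `X` be a compact Hausdorff space and `A` a unital `C(X)`-algebra with structure map
`Φ : C(X, ℂ) → A` whose range is exactly the center of `A`.  For `x : X`, let
`I_x = closedIdealGen (Φ '' J_x)` be the closed two-sided ideal generated by the functions
vanishing at `x`.  Then `A` is weakly central iff for every `x` with `I_x ≠ A`, the fiber
`A/I_x` has exactly one maximal closed two-sided ideal; by the ideal correspondence for
quotients, the latter is expressed as: there is exactly one maximal closed two-sided ideal
of `A` containing `I_x`. -/
theorem weaklyCentral_iff_fibers_have_unique_maximal_ideal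
    {X A : Type*} [TopologicalSpace X] [CompactSpace X] [T2Space X]
    [NormedRing A] [StarRing A] [CStarRing A]
    [NormedAlgebra ℂ A] [StarModule ℂ A] [CompleteSpace A]
    (Φ : C(X, ℂ) →⋆ₐ[ℂ] A)
    (hΦ : Set.range ⇑Φ = centerSet A) :
    WeaklyCentral A ↔
      ∀ x : X, closedIdealGen (⇑Φ '' {f : C(X, ℂ) | f x = 0}) ≠ Set.univ →
        ∃! N : Set A, IsMaxClosedIdealSet N ∧
          closedIdealGen (⇑Φ '' {f : C(X, ℂ) | f x = 0}) ⊆ N := by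
  have hgen : ∀ (x : X) (M : Set A), IsMaxClosedIdealSet M →
      (closedIdealGen (⇑Φ '' {f : C(X, ℂ) | f x = 0}) ⊆ M ↔ ∀ f, Φ f ∈ M ↔ f x = 0) := by
    intro x M hM
    constructor
    · intro h
      obtain ⟨y, hy⟩ := aux_point Φ hΦ hM
      have hxy : x = y := aux_sep fun f hf =>
        (hy f).1 (h fun T hT => hT.2 ⟨f, hf, rfl⟩)
      rwa [hxy]
    · intro h a ha
      refine ha M ⟨hM.1, ?_⟩
      rintro _ ⟨f, hf, rfl⟩
      exact (h f).2 hf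
  constructor
  · rintro ⟨-, hinj⟩ x hx
    obtain ⟨N, hN, hIN⟩ := aux_exists (aux_gen_ideal _) hx
    refine ⟨N, ⟨hN, hIN⟩, ?_⟩
    rintro N' ⟨hN', hIN'⟩
    apply hinj _ _ hN' hN
    have e1 := (hgen x N hN).1 hIN
    have e2 := (hgen x N' hN').1 hIN'
    rw [← hΦ]
    ext a
    constructor
    · rintro ⟨ha, f, rfl⟩
      exact ⟨(e1 f).2 ((e2 f).1 ha), f, rfl⟩
    · rintro ⟨ha, f, rfl⟩
      exact ⟨(e2 f).2 ((e1 f).1 ha), f, rfl⟩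
  · intro H
    refine ⟨?_, ?_⟩
    · intro M hM hc
      exact hM.2.1 (aux_one hM.1.1 (hc fun a => by simp))
    · intro M N hM hN hMN
      obtain ⟨x, hx⟩ := aux_point Φ hΦ hM
      have hIM := (hgen x M hM).2 hx
      have hIN := (hgen x N hN).2 (fun f => by
        rw [← hx f]
        have hf : Φ f ∈ centerSet A := hΦ ▸ Set.mem_range_self f
        have := Set.ext_iff.1 hMN (Φ f)
        simp only [Set.mem_inter_iff, hf, and_true] at this
        exact this.symm)
      have hne : closedIdealGen (⇑Φ '' {f : C(X, ℂ) | f x = 0}) ≠ Set.univ := by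
        intro h
        rw [h] at hIM
        exact hM.2.1 (Set.univ_subset_iff.1 hIM)
      exact (H x hne).unique ⟨hM, hIM⟩ ⟨hN, hIN⟩
end

section
/- Let X be a compact Hausdorff space and let A be a unital C(X)-algebra whose structure map Φ : C(X,ℂ) → Z(A) satisfies Φ(C(X,ℂ)) = Z(A). If A is weakly central, then for every x ∈ X with I_x ≠ A the center of the fiber A(x) = A/I_x is one-dimensional, i.e. equals ℂ·1. -/
section Helpers
variable {R : Type*}

theorem IsIdealSet.sub_mem' [NonUnitalNonAssocRing R] {S : Set R} (h : IsIdealSet S) {x y : R}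
    (hx : x ∈ S) (hy : y ∈ S) : x - y ∈ S := by
  rw [sub_eq_add_neg]; exact h.2.1 _ hx _ (h.2.2.1 _ hy)

theorem IsIdealSet.eq_univ [Ring R] {S : Set R} (h : IsIdealSet S) (h1 : (1 : R) ∈ S) :
    S = Set.univ := by
  ext y
  have := (h.2.2.2 1 h1 y).1
  simpa using this

theorem isClosedIdealSet_closedIdealGen [NonUnitalNonAssocRing R] [TopologicalSpace R]
    (S : Set R) : IsClosedIdealSet (closedIdealGen S) := by
  refine ⟨⟨?_, ?_, ?_, ?_⟩, ?_⟩
  · intro T hT; exact hT.1.1.1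
  · intro x hx y hy T hT; exact hT.1.1.2.1 _ (hx T hT) _ (hy T hT)
  · intro x hx T hT; exact hT.1.1.2.2.1 _ (hx T hT)
  · intro x hx a
    exact ⟨fun T hT => (hT.1.1.2.2.2 _ (hx T hT) a).1, fun T hT => (hT.1.1.2.2.2 _ (hx T hT) a).2⟩
  · exact isClosed_sInter fun T hT => hT.1.2

theorem IsIdealSet.closure' [NormedRing R] {S : Set R} (h : IsIdealSet S) :
    IsIdealSet (closure S) := by
  refine ⟨subset_closure h.1, ?_, ?_, ?_⟩
  · intro x hx y hy
    exact map_mem_closure₂ continuous_add hx hy h.2.1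
  · intro x hx
    exact map_mem_closure continuous_neg hx h.2.2.1
  · intro x hx a
    exact ⟨map_mem_closure (continuous_const_mul a) hx fun y hy => (h.2.2.2 y hy a).1,
      map_mem_closure (f := fun y => y * a) (continuous_mul_const a) hx fun y hy => (h.2.2.2 y hy a).2⟩

theorem IsIdealSet.one_notMem_closure [NormedRing R] [CompleteSpace R] {S : Set R}
    (h : IsIdealSet S) (h1 : (1 : R) ∉ S) : (1 : R) ∉ closure S := by
  intro hc
  obtain ⟨y, hy, hd⟩ := Metric.mem_closure_iff.1 hc 1 one_pos
  rw [dist_eq_norm] at hd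
  have hu := isUnit_one_sub_of_norm_lt_one hd
  rw [sub_sub_cancel] at hu
  obtain ⟨u, rfl⟩ := hu
  apply h1
  have := (h.2.2.2 _ hy (↑u⁻¹ : R)).1
  simpa using this

theorem exists_max_closed [NormedRing R] [CompleteSpace R] {T : Set R}
    (h : IsIdealSet T) (h1 : (1 : R) ∉ T) : ∃ M, IsMaxClosedIdealSet M ∧ T ⊆ M := by
  obtain ⟨M, hTM, hM⟩ := zorn_subset_nonempty {S : Set R | IsIdealSet S ∧ (1 : R) ∉ S} (by
    intro c hcS hc hne
    refine ⟨⋃₀ c, ⟨⟨?_, ?_, ?_, ?_⟩, ?_⟩, fun s hs => Set.subset_sUnion_of_mem hs⟩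
    · obtain ⟨s, hs⟩ := hne
      exact ⟨s, hs, (hcS hs).1.1⟩
    · rintro x ⟨s, hs, hx⟩ y ⟨t, ht, hy⟩
      rcases hc.total hs ht with hst | hst
      · exact ⟨t, ht, (hcS ht).1.2.1 _ (hst hx) _ hy⟩
      · exact ⟨s, hs, (hcS hs).1.2.1 _ hx _ (hst hy)⟩
    · rintro x ⟨s, hs, hx⟩
      exact ⟨s, hs, (hcS hs).1.2.2.1 _ hx⟩
    · rintro x ⟨s, hs, hx⟩ a
      exact ⟨⟨s, hs, ((hcS hs).1.2.2.2 _ hx a).1⟩, ⟨s, hs, ((hcS hs).1.2.2.2 _ hx a).2⟩⟩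
    · rintro ⟨s, hs, hx⟩
      exact (hcS hs).2 hx) T ⟨h, h1⟩
  have hMp : IsIdealSet M ∧ (1 : R) ∉ M := hM.prop
  have hmax : ∀ S : Set R, IsIdealSet S → (1 : R) ∉ S → M ⊆ S → S ⊆ M :=
    fun S hS hS1 hMS => hM.le_of_ge (show S ∈ {S : Set R | IsIdealSet S ∧ (1 : R) ∉ S} from
      ⟨hS, hS1⟩) hMS
  refine ⟨M, ⟨⟨hMp.1, ?_⟩, ?_, ?_⟩, hTM⟩
  · exact isClosed_of_closure_subset
      (hmax _ hMp.1.closure' (hMp.1.one_notMem_closure hMp.2) subset_closure)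
  · intro hu; exact hMp.2 (hu ▸ Set.mem_univ _)
  · intro S hS hMS
    by_cases hS1 : (1 : R) ∈ S
    · exact Or.inr (hS.1.eq_univ hS1)
    · exact Or.inl (Set.Subset.antisymm (hmax S hS.1 hS1 hMS) hMS)

theorem sa_case {A : Type*} [CStarAlgebra A] {I : Set A} (hI : IsClosedIdealSet I)
    (h1 : (1 : A) ∉ I) (a : A) (ha : IsSelfAdjoint a) (hc : ∀ b, a * b - b * a ∈ I)
    (huniq : ∀ M N : Set A, IsMaxClosedIdealSet M → IsMaxClosedIdealSet N → I ⊆ M → I ⊆ N →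
      M = N) : ∃ c : ℝ, a - algebraMap ℝ A c ∈ I := by
  let φ := cfcHom (R := ℝ) ha
  have hφid : φ (ContinuousMap.restrict (spectrum ℝ a) (ContinuousMap.id ℝ)) = a := cfcHom_id ha
  have hφc : ∀ s : ℝ, φ (ContinuousMap.const _ s) = algebraMap ℝ A s := fun s =>
    AlgHomClass.commutes φ s
  have hφcont : Continuous φ := cfcHom_continuous ha
  let K : Ideal C(spectrum ℝ a, ℝ) :=
    { carrier := φ ⁻¹' I
      add_mem' := fun {f g} hf hg => by
        show φ (f + g) ∈ I
        rw [map_add]; exact hI.1.2.1 _ hf _ hg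
      zero_mem' := by
        show φ 0 ∈ I
        rw [map_zero]; exact hI.1.1
      smul_mem' := fun g f hf => by
        show φ (g * f) ∈ I
        rw [map_mul]; exact (hI.1.2.2.2 _ hf _).1 }
  have hKmem : ∀ f, f ∈ K ↔ φ f ∈ I := fun f => Iff.rfl
  have hKcl : IsClosed (K : Set C(spectrum ℝ a, ℝ)) := hI.2.preimage hφcont
  have hK := ContinuousMap.idealOfSet_ofIdeal_isClosed hKcl
  have key : ∀ f : C(spectrum ℝ a, ℝ), (∀ s, s ∉ ContinuousMap.setOfIdeal K → f s = 0) →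
      φ f ∈ I := by
    intro f hf
    rw [← hKmem, ← hK, ContinuousMap.mem_idealOfSet]
    intro s hs
    exact hf s hs
  -- for each point of the zero set there is a maximal ideal
  have hmax : ∀ s, s ∉ ContinuousMap.setOfIdeal K → ∃ M, IsMaxClosedIdealSet M ∧ I ⊆ M ∧
      a - algebraMap ℝ A s ∈ M := by
    intro s hs
    rw [ContinuousMap.notMem_setOfIdeal] at hs
    set d := a - algebraMap ℝ A (s : ℝ) with hd
    have hdc : ∀ b, d * b - b * d ∈ I := by
      intro b
      have : d * b - b * d = a * b - b * a := by
        rw [hd, sub_mul, mul_sub, Algebra.commutes (s : ℝ) b]; abel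
      rw [this]; exact hc b
    let T : Set A := {u | ∃ b, u - d * b ∈ I}
    have hT : IsIdealSet T := by
      refine ⟨⟨0, by simpa using hI.1.1⟩, ?_, ?_, ?_⟩
      · rintro x ⟨b, hb⟩ y ⟨b', hb'⟩
        refine ⟨b + b', ?_⟩
        have := hI.1.2.1 _ hb _ hb'
        convert this using 1
        noncomm_ring
      · rintro x ⟨b, hb⟩
        refine ⟨-b, ?_⟩
        have := hI.1.2.2.1 _ hb
        convert this using 1
        noncomm_ring
      · rintro x ⟨b, hb⟩ e
        refine ⟨⟨e * b, ?_⟩, ⟨b * e, ?_⟩⟩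
        · have h2 := (hI.1.2.2.2 _ hb e).1
          have h3 := (hI.1.2.2.2 _ (hdc e) b).2
          have := hI.1.sub_mem' h2 h3
          convert this using 1
          noncomm_ring
        · have h2 := (hI.1.2.2.2 _ hb e).2
          convert h2 using 1
          noncomm_ring
    have hT1 : (1 : A) ∉ T := by
      rintro ⟨b, hb⟩
      obtain ⟨ε, hε, hεb⟩ : ∃ ε : ℝ, 0 < ε ∧ ε * ‖b‖ < 1 := by
        refine ⟨1 / (‖b‖ + 1), by positivity, ?_⟩
        rw [div_mul_eq_mul_div, one_mul, div_lt_one (by positivity)]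
        linarith
      let f : C(spectrum ℝ a, ℝ) := ⟨fun r => max 0 (ε - |(r : ℝ) - s|), by fun_prop⟩
      let h : C(spectrum ℝ a, ℝ) := ⟨fun r => max (-ε) (min ε ((r : ℝ) - s)), by fun_prop⟩
      have hfh : f * h = f * (ContinuousMap.restrict (spectrum ℝ a) (ContinuousMap.id ℝ) -
          ContinuousMap.const _ (s : ℝ)) := by
        ext r
        show max 0 (ε - |(r : ℝ) - s|) * max (-ε) (min ε ((r : ℝ) - s)) =
          max 0 (ε - |(r : ℝ) - s|) * ((r : ℝ) - s)
        rcases le_total (ε - |(r : ℝ) - s|) 0 with hr | hr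
        · rw [max_eq_left hr]; simp
        · have h4 := abs_le.1 (show |(r : ℝ) - s| ≤ ε by linarith)
          rw [min_eq_right h4.2, max_eq_right h4.1]
      have hh : ‖φ h‖ ≤ ε := by
        have : ‖φ h‖ = ‖h‖ := norm_cfcHom (𝕜 := ℝ) a h ha
        rw [this, ContinuousMap.norm_le _ hε.le]
        intro r
        show |max (-ε) (min ε ((r : ℝ) - s))| ≤ ε
        rw [abs_le]
        exact ⟨le_max_left _ _, max_le (by linarith) (min_le_left _ _)⟩
      have hfd : φ f * φ h = φ f * d := by
        rw [← map_mul, hfh, map_mul, map_sub, hφid, hφc]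
      have hlt : ‖φ h * b‖ < 1 :=
        (norm_mul_le _ _).trans_lt
          ((mul_le_mul_of_nonneg_right hh (norm_nonneg _)).trans_lt hεb)
      obtain ⟨u, hu⟩ := isUnit_one_sub_of_norm_lt_one hlt
      have h5 : φ f * (u : A) ∈ I := by
        have := (hI.1.2.2.2 _ hb (φ f)).1
        convert this using 1
        rw [hu, mul_sub, mul_sub, ← mul_assoc, hfd, mul_assoc]
      have h6 : φ f ∈ I := by
        have := (hI.1.2.2.2 _ h5 (↑u⁻¹ : A)).2
        simpa [mul_assoc] using this
      have h7 : f s = 0 := hs h6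
      have h8 : f s = ε := by
        show max 0 (ε - |(s : ℝ) - s|) = ε
        simp [hε.le]
      linarith
    obtain ⟨M, hM, hTM⟩ := exists_max_closed hT hT1
    refine ⟨M, hM, fun i hi => hTM ⟨0, by simpa using hi⟩, hTM ⟨1, by simpa using hI.1.1⟩⟩
  obtain ⟨s, hs⟩ : ∃ s, s ∉ ContinuousMap.setOfIdeal K := by
    by_contra hcon
    push Not at hcon
    apply h1
    have := key 1 (fun s hs => absurd (hcon s) hs)
    rwa [map_one] at this
  refine ⟨s, ?_⟩
  have hfin : a - algebraMap ℝ A (s : ℝ) =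
      φ (ContinuousMap.restrict (spectrum ℝ a) (ContinuousMap.id ℝ) -
        ContinuousMap.const _ (s : ℝ)) := by
    rw [map_sub, hφid, hφc]
  rw [hfin]
  apply key
  intro t ht
  obtain ⟨M, hM, hIM, hMs⟩ := hmax s hs
  obtain ⟨N, hN, hIN, hNt⟩ := hmax t ht
  obtain rfl := huniq M N hM hN hIM hIN
  show (t : ℝ) - s = 0
  by_contra hne
  apply hM.2.1
  apply hM.1.1.eq_univ
  have h2 := (hM.1.1.2.2.2 _ (hM.1.1.sub_mem' hMs hNt) (algebraMap ℝ A ((t : ℝ) - s)⁻¹)).1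
  rw [sub_sub_sub_cancel_left, ← map_sub, ← map_mul, inv_mul_cancel₀ hne, map_one] at h2
  exact h2

end Helpers

/-- **Weak centrality forces one-dimensional centers of fibers.**
Let `X` be compact Hausdorff and `A` a unital `C(X)`-algebra whose structure map
`Φ : C(X, ℂ) → A` has range exactly the center of `A`.  If `A` is weakly central, then for
every `x : X` with `I_x ≠ A`, the center of the fiber `A/I_x` is `ℂ·1`: an element
`a : A` is central modulo `I_x` iff it is congruent modulo `I_x` to a scalar multiple of
the unit. -/
theorem weaklyCentral_fiber_center_one_dimensional
    {X A : Type*} [TopologicalSpace X] [CompactSpace X] [T2Space X]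
    [NormedRing A] [StarRing A] [CStarRing A]
    [NormedAlgebra ℂ A] [StarModule ℂ A] [CompleteSpace A]
    (Φ : C(X, ℂ) →⋆ₐ[ℂ] A)
    (hΦ : Set.range ⇑Φ = centerSet A)
    (hwc : WeaklyCentral A) :
    ∀ x : X, closedIdealGen (⇑Φ '' {f : C(X, ℂ) | f x = 0}) ≠ Set.univ →
      ∀ a : A,
        (∀ b : A, a * b - b * a ∈ closedIdealGen (⇑Φ '' {f : C(X, ℂ) | f x = 0})) ↔
          ∃ c : ℂ, a - c • (1 : A) ∈ closedIdealGen (⇑Φ '' {f : C(X, ℂ) | f x = 0}) := by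
  intro x hx a
  letI : CStarAlgebra A := {}
  set S : Set A := ⇑Φ '' {f : C(X, ℂ) | f x = 0} with hS
  have hI := isClosedIdealSet_closedIdealGen S
  have hSI : S ⊆ closedIdealGen S := fun y hy T hT => hT.2 hy
  have hstar : ∀ y ∈ closedIdealGen S, star y ∈ closedIdealGen S := by
    intro y hy T hT
    have := hy (star ⁻¹' T) ⟨⟨⟨?_, ?_, ?_, ?_⟩, hT.1.2.preimage continuous_star⟩, ?_⟩
    · exact this
    · show star (0 : A) ∈ T
      rw [star_zero]; exact hT.1.1.1
    · intro u hu v hv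
      show star (u + v) ∈ T
      rw [star_add]; exact hT.1.1.2.1 _ hu _ hv
    · intro u hu
      show star (-u) ∈ T
      rw [star_neg]; exact hT.1.1.2.2.1 _ hu
    · intro u hu v
      have := hT.1.1.2.2.2 _ hu (star v)
      constructor
      · show star (v * u) ∈ T
        rw [star_mul]; exact this.2
      · show star (u * v) ∈ T
        rw [star_mul]; exact this.1
    · rintro _ ⟨f, hf, rfl⟩
      show star (Φ f) ∈ T
      rw [← map_star]
      refine hT.2 ⟨star f, ?_, rfl⟩
      have hf' : f x = 0 := hf
      show star (f x) = 0
      rw [hf', star_zero]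
  generalize hJ : closedIdealGen S = I at *
  have h1 : (1 : A) ∉ I := fun h => hx (hI.1.eq_univ h)
  have hsmul : ∀ (c : ℂ), ∀ y ∈ I, c • y ∈ I := by
    intro c y hy
    have := (hI.1.2.2.2 _ hy (c • (1 : A))).1
    simpa using this
  have hinter : ∀ M : Set A, IsMaxClosedIdealSet M → I ⊆ M → M ∩ centerSet A = S := by
    intro M hM hIM
    ext z
    constructor
    · rintro ⟨hzM, hzc⟩
      rw [← hΦ] at hzc
      obtain ⟨f, rfl⟩ := hzc
      refine ⟨f, ?_, rfl⟩
      by_contra hfx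
      have hfx' : f x ≠ 0 := hfx
      apply hM.2.1
      apply hM.1.1.eq_univ
      have h2 : Φ (f - algebraMap ℂ C(X, ℂ) (f x)) ∈ M := by
        apply hIM; apply hSI
        refine ⟨_, ?_, rfl⟩
        show f x - algebraMap ℂ C(X, ℂ) (f x) x = 0
        simp
      have h3 := hM.1.1.sub_mem' hzM h2
      rw [← map_sub, sub_sub_cancel, AlgHomClass.commutes] at h3
      have h4 := (hM.1.1.2.2.2 _ h3 (algebraMap ℂ A (f x)⁻¹)).1
      rw [← map_mul, inv_mul_cancel₀ hfx', map_one] at h4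
      exact h4
    · intro hz
      refine ⟨hIM (hSI hz), ?_⟩
      rw [← hΦ]
      obtain ⟨f, -, rfl⟩ := hz
      exact ⟨f, rfl⟩
  have huniq : ∀ M N : Set A, IsMaxClosedIdealSet M → IsMaxClosedIdealSet N → I ⊆ M → I ⊆ N →
      M = N := fun M N hM hN hIM hIN =>
    hwc.2 M N hM hN ((hinter M hM hIM).trans (hinter N hN hIN).symm)
  constructor
  · intro hc
    have hcs : ∀ b, star a * b - b * star a ∈ I := by
      intro b
      have := hstar _ (hI.1.2.2.1 _ (hc (star b)))
      simpa using this
    obtain ⟨c, hcI⟩ := sa_case hI h1 (a + star a) (IsSelfAdjoint.add_star_self a) (by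
      intro b
      have := hI.1.2.1 _ (hc b) _ (hcs b)
      convert this using 1
      noncomm_ring) huniq
    obtain ⟨e, heI⟩ := sa_case hI h1 (Complex.I • (a - star a)) (by
      rw [isSelfAdjoint_iff, star_smul, star_sub, star_star]
      simp [← smul_neg]) (by
      intro b
      have := hsmul Complex.I _ (hI.1.sub_mem' (hc b) (hcs b))
      convert this using 1
      rw [smul_mul_assoc, mul_smul_comm, ← smul_sub]
      congr 1
      noncomm_ring) huniq
    refine ⟨(1 / 2 : ℂ) * (c - Complex.I * e), ?_⟩
    have h2 := hsmul (1 / 2) _ (hI.1.sub_mem' hcI (hsmul Complex.I _ heI))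
    convert h2 using 1
    rw [Algebra.algebraMap_eq_smul_one, Algebra.algebraMap_eq_smul_one,
      ← Complex.coe_smul, ← Complex.coe_smul]
    have hII : Complex.I * Complex.I = -1 := Complex.I_mul_I
    simp only [smul_sub, smul_add, smul_smul, mul_sub, sub_smul]
    have h5 : (1 / 2 * (Complex.I * Complex.I) : ℂ) = -(1 / 2) := by rw [hII]; ring
    rw [h5, ← mul_assoc]
    have h6 : a = (1 / 2 : ℂ) • a + (1 / 2 : ℂ) • a := by rw [← add_smul]; norm_num
    nth_rewrite 1 [h6]
    simp only [neg_smul, mul_assoc]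
    abel
  · rintro ⟨c, hcI⟩ b
    have h2 := hI.1.2.2.2 _ hcI b
    have := hI.1.sub_mem' h2.2 h2.1
    convert this using 1
    rw [sub_mul, mul_sub, smul_mul_assoc, mul_smul_comm, one_mul, mul_one]
    abel
end

section
/- Let A be a unital C*-algebra over ℂ. Then A is weakly central if and only if, for every maximal ideal N of the center Z(A), the quotient of A by the closed two-sided ideal of A generated by N has exactly one maximal (closed) two-sided ideal. -/
section Helpers

theorem aux_comm {B : Type*} [CommCStarAlgebra B] (N : Ideal B) (hN : N.IsMaximal) :
    ∃ χ : B →ₐ[ℂ] ℂ, (∀ z ∈ N, χ z = 0) ∧ (∀ b, ‖χ b‖ ≤ ‖b‖) ∧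
      ∀ z ∈ N, ∀ ε : ℝ, 0 < ε → ∃ c g : B, ‖c‖ ≤ 1 ∧ χ c = 1 ∧ c * g = 0 ∧ ‖z - g * z‖ ≤ ε := by
  haveI := hN
  let φ := N.toCharacterSpace
  have hφ : ∀ z ∈ N, φ z = 0 := fun z hz => N.toCharacterSpace_apply_eq_zero_of_mem hz
  have hiso : ∀ b : B, ‖gelfandStarTransform B b‖ = ‖b‖ := fun b =>
    (gelfandTransform_isometry B).norm_map_of_map_zero (map_zero _) b
  have happ : ∀ (b : B) (ψ : WeakDual.characterSpace ℂ B), gelfandStarTransform B b ψ = ψ b :=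
    fun b ψ => rfl
  refine ⟨WeakDual.CharacterSpace.equivAlgHom φ, ?_, ?_, ?_⟩
  · intro z hz
    exact hφ z hz
  · intro b
    rw [← hiso b]
    exact (gelfandStarTransform B b).norm_coe_le_norm φ
  · intro z hz ε hε
    let Z := gelfandStarTransform B z
    let C : C(WeakDual.characterSpace ℂ B, ℂ) :=
      ⟨fun ψ => ((max 0 (1 - ‖Z ψ‖ / (ε / 2)) : ℝ) : ℂ), by fun_prop⟩
    let G : C(WeakDual.characterSpace ℂ B, ℂ) :=
      ⟨fun ψ => ((min 1 (max 0 (‖Z ψ‖ / (ε / 2) - 1)) : ℝ) : ℂ), by fun_prop⟩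
    refine ⟨(gelfandStarTransform B).symm C, (gelfandStarTransform B).symm G, ?_, ?_, ?_, ?_⟩
    · rw [← hiso, StarAlgEquiv.apply_symm_apply, ContinuousMap.norm_le _ zero_le_one]
      intro ψ
      have h0 : 0 ≤ ‖Z ψ‖ / (ε / 2) := by positivity
      simp only [C, ContinuousMap.coe_mk, Complex.norm_real, Real.norm_eq_abs]
      rw [abs_of_nonneg (le_max_left _ _)]
      exact max_le zero_le_one (by linarith)
    · change φ _ = 1
      rw [← happ, StarAlgEquiv.apply_symm_apply]
      have : Z φ = 0 := hφ z hz
      simp [C, this]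
    · rw [← map_mul]
      have : C * G = 0 := by
        ext ψ
        simp only [C, G, ContinuousMap.mul_apply, ContinuousMap.coe_mk, ContinuousMap.zero_apply]
        rw [← Complex.ofReal_mul]
        rcases le_total (‖Z ψ‖ / (ε / 2)) 1 with h | h
        · rw [max_eq_left (a := (0:ℝ)) (b := ‖Z ψ‖ / (ε / 2) - 1) (by linarith)]
          simp
        · rw [max_eq_left (a := (0:ℝ)) (b := 1 - ‖Z ψ‖ / (ε / 2)) (by linarith)]
          simp
      rw [this, map_zero]
    · rw [← hiso, map_sub, map_mul, StarAlgEquiv.apply_symm_apply, ContinuousMap.norm_le _ hε.le]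
      intro ψ
      change ‖Z ψ - G ψ * Z ψ‖ ≤ ε
      have h1 : Z ψ - G ψ * Z ψ =
          ((1 - min 1 (max 0 (‖Z ψ‖ / (ε / 2) - 1)) : ℝ) : ℂ) * Z ψ := by
        simp only [G, ContinuousMap.coe_mk]
        push_cast
        ring
      rw [h1, norm_mul, Complex.norm_real, Real.norm_eq_abs,
        abs_of_nonneg (by linarith [min_le_left (1:ℝ) (max 0 (‖Z ψ‖ / (ε / 2) - 1))])]
      have hz0 := norm_nonneg (Z ψ)
      rcases le_total (‖Z ψ‖) ε with h | h
      · have : 0 ≤ min 1 (max 0 (‖Z ψ‖ / (ε / 2) - 1)) :=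
          le_min zero_le_one (le_max_left _ _)
        nlinarith
      · have h2 : 2 ≤ ‖Z ψ‖ / (ε / 2) := by
          rw [le_div_iff₀ (by positivity)]; linarith
        rw [min_eq_left (le_max_of_le_right (by linarith))]
        simp [hε.le]

variable {A : Type*} [NormedRing A]

theorem eq_univ_of_one_mem {S : Set A} (hS : IsIdealSet S) (h : (1 : A) ∈ S) : S = Set.univ := by
  ext x
  simpa using (hS.2.2.2 1 h x).1

theorem isIdealSet_closure {S : Set A} (hS : IsIdealSet S) : IsIdealSet (closure S) := by
  obtain ⟨h0, ha, hn, hm⟩ := hS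
  refine ⟨subset_closure h0, ?_, ?_, ?_⟩
  · intro x hx y hy
    exact map_mem_closure₂ continuous_add hx hy ha
  · intro x hx
    exact map_mem_closure continuous_neg hx hn
  · intro x hx a
    exact ⟨map_mem_closure (f := fun x => a * x) (by fun_prop) hx (fun y hy => (hm y hy a).1),
      map_mem_closure (f := fun x => x * a) (by fun_prop) hx (fun y hy => (hm y hy a).2)⟩

theorem one_mem_of_closure [CompleteSpace A] {S : Set A} (hS : IsIdealSet S)
    (h : (1 : A) ∈ closure S) : (1 : A) ∈ S := by
  obtain ⟨u, hu, hd⟩ := Metric.mem_closure_iff.1 h 1 one_pos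
  rw [dist_eq_norm] at hd
  have : IsUnit u := by
    have := isUnit_one_sub_of_norm_lt_one hd
    simpa using this
  obtain ⟨v, rfl⟩ := this
  simpa using (hS.2.2.2 _ hu (↑v⁻¹ : A)).1

theorem exists_max [CompleteSpace A] {I : Set A} (hI : IsClosedIdealSet I) (h1 : (1 : A) ∉ I) :
    ∃ M, IsMaxClosedIdealSet M ∧ I ⊆ M := by
  obtain ⟨M, hIM, hM⟩ := zorn_subset_nonempty {T : Set A | IsClosedIdealSet T ∧ (1 : A) ∉ T}
    (by
      intro c hc hch hne
      have hU : IsIdealSet (⋃₀ c) := by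
        obtain ⟨T0, hT0⟩ := hne
        refine ⟨⟨T0, hT0, (hc hT0).1.1.1⟩, ?_, ?_, ?_⟩
        · rintro x ⟨S, hS, hx⟩ y ⟨T, hT, hy⟩
          rcases hch.total hS hT with h | h
          · exact ⟨T, hT, (hc hT).1.1.2.1 x (h hx) y hy⟩
          · exact ⟨S, hS, (hc hS).1.1.2.1 x hx y (h hy)⟩
        · rintro x ⟨S, hS, hx⟩
          exact ⟨S, hS, (hc hS).1.1.2.2.1 x hx⟩
        · rintro x ⟨S, hS, hx⟩ a
          exact ⟨⟨S, hS, ((hc hS).1.1.2.2.2 x hx a).1⟩, ⟨S, hS, ((hc hS).1.1.2.2.2 x hx a).2⟩⟩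
      refine ⟨closure (⋃₀ c), ⟨⟨isIdealSet_closure hU, isClosed_closure⟩, ?_⟩, ?_⟩
      · intro h
        obtain ⟨S, hS, h1S⟩ := one_mem_of_closure hU h
        exact (hc hS).2 h1S
      · intro S hS
        exact (Set.subset_sUnion_of_mem hS).trans subset_closure) I ⟨hI, h1⟩
  refine ⟨M, ⟨hM.prop.1, fun h => hM.prop.2 (h ▸ Set.mem_univ _), ?_⟩, hIM⟩
  intro T hT hMT
  by_cases h : (1 : A) ∈ T
  · exact Or.inr (eq_univ_of_one_mem hT.1 h)
  · exact Or.inl (hM.eq_of_superset ⟨hT, h⟩ hMT)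

theorem one_not_mem {M : Set A} (hM : IsMaxClosedIdealSet M) : (1 : A) ∉ M :=
  fun h => hM.2.1 (eq_univ_of_one_mem hM.1.1 h)

theorem prime_central {M : Set A} (hM : IsMaxClosedIdealSet M) {f g : A}
    (hg : ∀ a, g * a = a * g) (hfg : f * g = 0) (hf : f ∉ M) : g ∈ M := by
  obtain ⟨⟨⟨h0, ha, hn, hm⟩, hcl⟩, -, hmax⟩ := hM
  have hT : IsClosedIdealSet {x : A | g * x ∈ M} := by
    refine ⟨⟨by simpa using h0, ?_, ?_, ?_⟩, hcl.preimage (by fun_prop)⟩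
    · intro x hx y hy
      simpa [mul_add] using ha _ hx _ hy
    · intro x hx
      simpa using hn _ hx
    · intro x hx a
      constructor
      · have := (hm _ hx a).1
        rwa [← mul_assoc, ← hg, mul_assoc] at this
      · simpa [mul_assoc] using (hm _ hx a).2
  rcases hmax _ hT (fun x hx => (hm x hx g).1) with h | h
  · exact absurd (h ▸ (show g * f ∈ M by rw [hg, hfg]; exact h0) : f ∈ M) hf
  · have : (1 : A) ∈ {x : A | g * x ∈ M} := h ▸ Set.mem_univ _
    simpa using this

end Helpers

section Center

variable {A : Type*} [NormedRing A] [StarRing A] [CStarRing A]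
    [NormedAlgebra ℂ A] [StarModule ℂ A] [CompleteSpace A]

theorem isClosed_center : IsClosed ((Subalgebra.center ℂ A : Subalgebra ℂ A) : Set A) := by
  have : ((Subalgebra.center ℂ A : Subalgebra ℂ A) : Set A) = ⋂ b : A, {z | b * z = z * b} := by
    ext z
    rw [SetLike.mem_coe, Subalgebra.mem_center_iff, Set.mem_iInter]
    rfl
  rw [this]
  exact isClosed_iInter fun b => isClosed_eq (by fun_prop) (by fun_prop)

theorem star_mem_center' {z : A} (hz : z ∈ Subalgebra.center ℂ A) :
    star z ∈ Subalgebra.center ℂ A := by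
  rw [Subalgebra.mem_center_iff] at *
  intro b
  simpa using (congrArg star (hz (star b))).symm

noncomputable abbrev centerCStar : CommCStarAlgebra (Subalgebra.center ℂ A) :=
  { (inferInstance : NormedRing (Subalgebra.center ℂ A)),
    (inferInstance : NormedAlgebra ℂ (Subalgebra.center ℂ A)) with
    mul_comm := fun a b => mul_comm a b
    star := fun z => ⟨star (z : A), star_mem_center' z.2⟩
    star_involutive := fun z => Subtype.ext (star_star _)
    star_mul := fun a b => Subtype.ext (star_mul _ _)
    star_add := fun a b => Subtype.ext (star_add _ _)
    star_smul := fun a b => Subtype.ext (star_smul _ _)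
    norm_mul_self_le := fun x => (CStarRing.norm_star_mul_self (x := (x : A))).symm.le
    toCompleteSpace := isClosed_center.completeSpace_coe }

theorem aux_center (N : Ideal (Subalgebra.center ℂ A)) (hN : N.IsMaximal) :
    ∃ χ : Subalgebra.center ℂ A →ₐ[ℂ] ℂ, (∀ z ∈ N, χ z = 0) ∧ (∀ b, ‖χ b‖ ≤ ‖(b : A)‖) ∧
      ∀ z ∈ N, ∀ ε : ℝ, 0 < ε → ∃ c g : Subalgebra.center ℂ A,
        ‖(c : A)‖ ≤ 1 ∧ χ c = 1 ∧ c * g = 0 ∧ ‖(z : A) - g * z‖ ≤ ε := by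
  letI := centerCStar (A := A)
  exact aux_comm (B := Subalgebra.center ℂ A) N hN

theorem center_comm (c : Subalgebra.center ℂ A) (a : A) : (c : A) * a = a * c :=
  (Subalgebra.mem_center_iff.1 c.2 a).symm

theorem exists_proper (N : Ideal (Subalgebra.center ℂ A)) (hN : N.IsMaximal) :
    ∃ I : Set A, IsClosedIdealSet I ∧ (1 : A) ∉ I ∧ ∀ z ∈ N, (z : A) ∈ I := by
  obtain ⟨χ, h0, hle, hex⟩ := aux_center N hN
  refine ⟨{a | ∀ ε : ℝ, 0 < ε → ∃ c : Subalgebra.center ℂ A, ‖(c : A)‖ ≤ 1 ∧ χ c = 1 ∧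
    ‖(c : A) * a‖ ≤ ε}, ⟨⟨?_, ?_, ?_, ?_⟩, ?_⟩, ?_, ?_⟩
  · intro ε hε
    obtain ⟨c, g, hc, hχ, -⟩ := hex 0 N.zero_mem ε hε
    exact ⟨c, hc, hχ, by simpa using hε.le⟩
  · intro x hx y hy ε hε
    obtain ⟨c, hc, hχ, hcx⟩ := hx (ε / 2) (by positivity)
    obtain ⟨d, hd, hχd, hdy⟩ := hy (ε / 2) (by positivity)
    refine ⟨c * d, ?_, by simp [hχ, hχd], ?_⟩
    · calc ‖((c * d : Subalgebra.center ℂ A) : A)‖ ≤ ‖(c : A)‖ * ‖(d : A)‖ := norm_mul_le _ _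
        _ ≤ 1 := mul_le_one₀ hc (norm_nonneg _) hd
    · have e : ((c * d : Subalgebra.center ℂ A) : A) * (x + y) =
          (d : A) * (c * x) + (c : A) * (d * y) := by
        have := center_comm c (d : A)
        simp only [MulMemClass.coe_mul, mul_add, ← mul_assoc, this]
      rw [e]
      have k1 := norm_mul_le (d : A) (c * x)
      have k2 := norm_mul_le (c : A) (d * y)
      have k3 := norm_add_le ((d : A) * (c * x)) ((c : A) * (d * y))
      have k4 := mul_le_of_le_one_left (norm_nonneg ((c : A) * x)) hd
      have k5 := mul_le_of_le_one_left (norm_nonneg ((d : A) * y)) hc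
      linarith
  · intro x hx ε hε
    simpa using hx ε hε
  · intro x hx a
    have key : ∀ ε : ℝ, 0 < ε → ∃ c : Subalgebra.center ℂ A, ‖(c : A)‖ ≤ 1 ∧ χ c = 1 ∧
        ‖(c : A) * x‖ * ‖a‖ ≤ ε := by
      intro ε hε
      obtain ⟨c, hc, hχ, hcx⟩ := hx (ε / (‖a‖ + 1)) (by positivity)
      refine ⟨c, hc, hχ, ?_⟩
      rw [le_div_iff₀ (by positivity)] at hcx
      nlinarith [norm_nonneg ((c : A) * x)]
    constructor
    · intro ε hε
      obtain ⟨c, hc, hχ, hcx⟩ := key ε hε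
      refine ⟨c, hc, hχ, ?_⟩
      rw [← mul_assoc, center_comm c a, mul_assoc]
      exact (norm_mul_le _ _).trans (by rwa [mul_comm])
    · intro ε hε
      obtain ⟨c, hc, hχ, hcx⟩ := key ε hε
      refine ⟨c, hc, hχ, ?_⟩
      rw [← mul_assoc]
      exact (norm_mul_le _ _).trans hcx
  · refine isClosed_of_closure_subset fun x hx ε hε => ?_
    obtain ⟨y, hy, hd⟩ := Metric.mem_closure_iff.1 hx (ε / 2) (by positivity)
    obtain ⟨c, hc, hχ, hcy⟩ := hy (ε / 2) (by positivity)
    refine ⟨c, hc, hχ, ?_⟩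
    rw [dist_eq_norm] at hd
    have e : (c : A) * x = c * (x - y) + c * y := by rw [mul_sub]; abel
    rw [e]
    have k1 := norm_add_le ((c : A) * (x - y)) (c * y)
    have k2 := norm_mul_le (c : A) (x - y)
    have k3 := mul_le_of_le_one_left (norm_nonneg (x - y)) hc
    linarith
  · intro h
    obtain ⟨c, hc, hχ, h1⟩ := h (1 / 2) (by norm_num)
    have := hle c
    rw [hχ, norm_one] at this
    rw [mul_one] at h1
    linarith
  · intro z hz ε hε
    obtain ⟨c, g, hc, hχ, hcg, hzg⟩ := hex z hz ε hε
    refine ⟨c, hc, hχ, ?_⟩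
    have hcg' : (c : A) * g = 0 := congrArg Subtype.val hcg
    have e : (c : A) * z = c * (z - g * z) := by
      rw [mul_sub, ← mul_assoc, hcg', zero_mul, sub_zero]
    rw [e]
    exact (norm_mul_le _ _).trans
      ((mul_le_of_le_one_left (norm_nonneg _) hc).trans hzg)

/-- A maximal closed ideal whose central part lies in `N` contains `N`. -/
theorem contains_of_le {M : Set A} (hM : IsMaxClosedIdealSet M)
    (N : Ideal (Subalgebra.center ℂ A)) (hN : N.IsMaximal)
    (h : ∀ z : Subalgebra.center ℂ A, (z : A) ∈ M → z ∈ N) :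
    ∀ z ∈ N, (z : A) ∈ M := by
  obtain ⟨χ, h0, hle, hex⟩ := aux_center N hN
  intro z hz
  rw [← hM.1.2.closure_eq, Metric.mem_closure_iff]
  intro ε hε
  obtain ⟨c, g, hc, hχ, hcg, hzg⟩ := hex z hz (ε / 2) (by positivity)
  have hcM : (c : A) ∉ M := fun hcM => by
    have := h0 c (h c hcM)
    rw [hχ] at this
    exact one_ne_zero this
  have hg : (g : A) ∈ M :=
    prime_central hM (center_comm g) (congrArg Subtype.val hcg : (c : A) * g = 0) hcM
  refine ⟨g * z, (hM.1.1.2.2.2 _ hg z).2, ?_⟩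
  rw [dist_eq_norm]
  linarith

theorem gen_subset_iff {S M : Set A} (hM : IsClosedIdealSet M) :
    closedIdealGen S ⊆ M ↔ S ⊆ M :=
  ⟨fun h x hx => h (fun _ hT => hT.2 hx), fun h _ hx => hx M ⟨hM, h⟩⟩

/-- The trace on the center. -/
def trace (M : Set A) (hM : IsIdealSet M) : Ideal (Subalgebra.center ℂ A) where
  carrier := {z | (z : A) ∈ M}
  zero_mem' := hM.1
  add_mem' := fun {a b} ha hb => hM.2.1 a ha b hb
  smul_mem' := fun c x hx => (hM.2.2.2 x hx c).1

theorem mem_center_iff' (z : A) : z ∈ centerSet A ↔ z ∈ Subalgebra.center ℂ A := by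
  rw [Subalgebra.mem_center_iff]
  exact ⟨fun h b => (h b).symm, fun h b => (h b).symm⟩

theorem trace_eq {M : Set A} (hM : IsMaxClosedIdealSet M)
    (N : Ideal (Subalgebra.center ℂ A)) (hN : N.IsMaximal)
    (h : ∀ z ∈ N, (z : A) ∈ M) : ∀ z : Subalgebra.center ℂ A, (z : A) ∈ M ↔ z ∈ N := by
  have hne : trace M hM.1.1 ≠ ⊤ := fun ht => one_not_mem hM
    ((Ideal.eq_top_iff_one _).1 ht)
  have := hN.eq_of_le hne (fun z hz => h z hz)
  intro z
  rw [this]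
  rfl

end Center

/-- **Weak centrality via quotients by ideals generated by maximal ideals of the center.**
A unital C*-algebra `A` is weakly central iff for every maximal ideal `N` of the center
`Z(A)`, the quotient of `A` by the closed two-sided ideal `⟨N⟩` generated by `N` has
exactly one maximal closed two-sided ideal; by the ideal correspondence for quotients,
the latter is expressed as: there is exactly one maximal closed two-sided ideal of `A`
containing `⟨N⟩`. -/
theorem weaklyCentral_iff_quotient_by_central_maximal_has_unique_maximal
    {A : Type*} [NormedRing A] [StarRing A] [CStarRing A]
    [NormedAlgebra ℂ A] [StarModule ℂ A] [CompleteSpace A] :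
    WeaklyCentral A ↔
      ∀ N : Ideal (Subalgebra.center ℂ A), N.IsMaximal →
        ∃! M : Set A, IsMaxClosedIdealSet M ∧
          closedIdealGen ((fun z : Subalgebra.center ℂ A => (z : A)) ''
            (N : Set (Subalgebra.center ℂ A))) ⊆ M := by
  constructor
  · rintro ⟨-, hinj⟩ N hN
    obtain ⟨I, hI, h1, hNI⟩ := exists_proper N hN
    obtain ⟨M, hM, hIM⟩ := exists_max hI h1
    refine ⟨M, ⟨hM, (gen_subset_iff hM.1).2 ?_⟩, ?_⟩
    · rintro _ ⟨z, hz, rfl⟩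
      exact hIM (hNI z hz)
    · rintro M' ⟨hM', hsub⟩
      rw [gen_subset_iff hM'.1] at hsub
      have e1 := trace_eq hM N hN (fun z hz => hIM (hNI z hz))
      have e2 := trace_eq hM' N hN (fun z hz => hsub ⟨z, hz, rfl⟩)
      refine hinj _ _ hM' hM ?_
      ext x
      constructor
      · rintro ⟨hx, hc⟩
        exact ⟨(e1 ⟨x, (mem_center_iff' x).1 hc⟩).2 ((e2 ⟨x, (mem_center_iff' x).1 hc⟩).1 hx), hc⟩
      · rintro ⟨hx, hc⟩
        exact ⟨(e2 ⟨x, (mem_center_iff' x).1 hc⟩).2 ((e1 ⟨x, (mem_center_iff' x).1 hc⟩).1 hx), hc⟩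
  · intro H
    refine ⟨fun M hM h => one_not_mem hM (h (fun a => by simp)), ?_⟩
    intro M M' hM hM' hMM
    have hne : trace M hM.1.1 ≠ ⊤ := fun ht => one_not_mem hM
      ((Ideal.eq_top_iff_one _).1 ht)
    obtain ⟨N, hN, hle⟩ := Ideal.exists_le_maximal _ hne
    have k1 := contains_of_le hM N hN (fun z hz => hle hz)
    have k2 := contains_of_le hM' N hN (fun z hz => hle (by
      have : (z : A) ∈ M ∩ centerSet A := hMM ▸ ⟨hz, (mem_center_iff' _).2 z.2⟩
      exact this.1))
    refine (H N hN).unique ⟨hM, (gen_subset_iff hM.1).2 ?_⟩ ⟨hM', (gen_subset_iff hM'.1).2 ?_⟩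
    · rintro _ ⟨z, hz, rfl⟩
      exact k1 z hz
    · rintro _ ⟨z, hz, rfl⟩
      exact k2 z hz
end

section
/- Let H be an infinite-dimensional separable complex Hilbert space. Then the C*-algebra A = C([0,1], B(H)) of continuous functions from [0,1] into the bounded operators B(H) is weakly central. -/
theorem wc_exists_far {H : Type*} [NormedAddCommGroup H] [InnerProductSpace ℂ H] [CompleteSpace H]
    (T : H →L[ℂ] H) (hT : ¬ IsCompactOperator T) :
    ∃ ε : ℝ, 0 < ε ∧ ∀ F : Submodule ℂ H, FiniteDimensional ℂ F →
      ∃ x ∈ Fᗮ, ‖x‖ = 1 ∧ ε ≤ ‖T x‖ := by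
  by_contra! hcon
  apply hT
  have hcl := isClosed_setOfPred_isCompactOperator (σ₁₂ := RingHom.id ℂ) (M₁ := H) (M₂ := H)
  have : T ∈ closure { f : H →L[ℂ] H | IsCompactOperator f } := by
    rw [Metric.mem_closure_iff]
    intro ε hε
    obtain ⟨F, hF, h⟩ := hcon (ε / 2) (by positivity)
    refine ⟨T ∘L F.starProjection, ?_, ?_⟩
    · have : ProperSpace F := FiniteDimensional.proper ℂ F
      have h1 : IsCompactOperator (F.orthogonalProjectionOnto) :=
        isCompactOperator_of_locallyCompactSpace_dom (F.orthogonalProjectionOnto)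
      exact h1.clm_comp (T ∘L F.subtypeL)
    · rw [dist_eq_norm]
      refine lt_of_le_of_lt (ContinuousLinearMap.opNorm_le_bound _ (by positivity : 0 ≤ ε / 2) ?_)
        (by linarith)
      intro x
      have hm : x - F.starProjection x ∈ Fᗮ := Submodule.sub_starProjection_mem_orthogonal x
      set y := x - F.starProjection x with hy
      have hyx : ‖y‖ ≤ ‖x‖ := by
        have h2 : y = Fᗮ.starProjection x := by
          simp [hy, Submodule.starProjection_orthogonal]
        rw [h2]
        exact Submodule.norm_starProjection_apply_le _ _
      have e : (T - T ∘L F.starProjection) x = T y := by simp [hy]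
      rw [e]
      by_cases h0 : y = 0
      · rw [h0]; simp; positivity
      · have hn : 0 < ‖y‖ := norm_pos_iff.mpr h0
        have h3 := h (((‖y‖⁻¹ : ℝ) : ℂ) • y) (Submodule.smul_mem _ _ hm) (by
          rw [norm_smul]; simp [hn.ne'])
        rw [map_smul, norm_smul] at h3
        simp only [Complex.norm_real, norm_inv, norm_norm] at h3
        rw [inv_mul_lt_iff₀ hn] at h3
        nlinarith
  rwa [hcl.closure_eq] at this

theorem wc_exists_seq {H : Type*} [NormedAddCommGroup H] [InnerProductSpace ℂ H] [CompleteSpace H]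
    (T : H →L[ℂ] H) (hT : ¬ IsCompactOperator T) :
    ∃ ε : ℝ, 0 < ε ∧ ∃ x : ℕ → H, Orthonormal ℂ x ∧ (∀ n, ε ≤ ‖T (x n)‖) ∧
      ∀ m n, m ≠ n → inner ℂ (T (x m)) (T (x n)) = 0 := by
  obtain ⟨ε, hε, h⟩ := wc_exists_far T hT
  refine ⟨ε, hε, ?_⟩
  obtain ⟨f, hf, hr⟩ := exists_seq_of_forall_finset_exists
    (fun x : H => ‖x‖ = 1 ∧ ε ≤ ‖T x‖)
    (fun x y => inner ℂ x y = 0 ∧ inner ℂ (T x) (T y) = 0) (by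
      classical
      intro s _
      obtain ⟨y, hy, h1, h2⟩ := h (Submodule.span ℂ
        ((s ∪ s.image (fun x => T.adjoint (T x)) : Finset H) : Set H))
        (FiniteDimensional.span_finset ℂ _)
      refine ⟨y, ⟨h1, h2⟩, fun x hx => ?_⟩
      rw [Submodule.mem_orthogonal] at hy
      refine ⟨hy x (Submodule.subset_span (by simp [hx])), ?_⟩
      rw [← ContinuousLinearMap.adjoint_inner_left]
      refine hy _ (Submodule.subset_span ?_)
      simp only [Finset.coe_union, Finset.coe_image]
      exact Or.inr ⟨x, hx, rfl⟩)
  refine ⟨f, ⟨fun n => (hf n).1, ?_⟩, fun n => (hf n).2, ?_⟩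
  · intro m n hmn
    rcases lt_or_gt_of_ne hmn with h | h
    · exact (hr m n h).1
    · exact inner_eq_zero_symm.mp (hr n m h).1
  · intro m n hmn
    rcases lt_or_gt_of_ne hmn with h | h
    · exact (hr m n h).2
    · exact inner_eq_zero_symm.mp (hr n m h).2

theorem wc_countable {H : Type*} [NormedAddCommGroup H] [InnerProductSpace ℂ H]
    [TopologicalSpace.SeparableSpace H] {ι : Type*} (b : ι → H) (hb : Orthonormal ℂ b) :
    Countable ι := by
  have hd : Pairwise (Function.onFun Disjoint (fun i => Metric.ball (b i) (1/2))) := by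
    intro i j hij
    apply Metric.ball_disjoint_ball
    have h1 : ‖b i - b j‖ ^ 2 = 2 := by
      rw [@norm_sub_sq ℂ, hb.2 hij, hb.1, hb.1]; norm_num
    rw [dist_eq_norm]
    nlinarith [norm_nonneg (b i - b j)]
  have := hd.countable_of_isOpen_disjoint (fun i => Metric.isOpen_ball)
    (fun i => ⟨b i, by simp⟩)
  exact this

theorem wc_pyth {H : Type*} [NormedAddCommGroup H] [InnerProductSpace ℂ H] {ι : Type*}
    (v : ι → H) (hv : ∀ i j, i ≠ j → inner ℂ (v i) (v j) = 0) (s : Finset ι) :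
    ‖∑ i ∈ s, v i‖ ^ 2 = ∑ i ∈ s, ‖v i‖ ^ 2 := by
  classical
  induction s using Finset.induction_on with
  | empty => simp
  | insert a s ha ih =>
    rw [Finset.sum_insert ha, Finset.sum_insert ha, @norm_add_sq ℂ, ih, inner_sum,
      Finset.sum_eq_zero]
    · simp
    · intro i hi
      exact hv a i (fun h => ha (h ▸ hi))

theorem wc_left_inv {H : Type*} [NormedAddCommGroup H] [InnerProductSpace ℂ H] [CompleteSpace H]
    [TopologicalSpace.SeparableSpace H]
    (T : H →L[ℂ] H) (hT : ¬ IsCompactOperator T) :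
    ∃ A B : H →L[ℂ] H, A * T * B = 1 := by
  obtain ⟨ε, hε, x, hx, hxT, hor⟩ := wc_exists_seq T hT
  obtain ⟨w, b, hb⟩ := exists_hilbertBasis ℂ H
  have : Countable w := wc_countable b b.orthonormal
  obtain ⟨e, he⟩ := exists_injective_nat w
  have hxe : Orthonormal ℂ (x ∘ e) := hx.comp e he
  let V₀ : H →ₗᵢ[ℂ] H := hxe.orthogonalFamily.linearIsometry.comp b.repr.toLinearIsometry
  let V : H →L[ℂ] H := V₀.toContinuousLinearMap
  have hV : ∀ i, V (b i) = x (e i) := by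
    intro i
    classical
    have : V (b i) = hxe.orthogonalFamily.linearIsometry (b.repr (b i)) := rfl
    rw [this, b.repr_self, hxe.orthogonalFamily.linearIsometry_apply_single]
    simp
  have hlow : ∀ ξ, ε * ‖ξ‖ ≤ ‖(T * V) ξ‖ := by
    intro ξ
    have h1 := b.hasSum_repr ξ
    have h2 := (T * V).hasSum h1
    refine le_of_tendsto_of_tendsto (h1.norm.const_mul ε) h2.norm (Filter.Eventually.of_forall ?_)
    intro s
    refine (pow_le_pow_iff_left₀ (by positivity) (norm_nonneg _) two_ne_zero).mp ?_
    rw [mul_pow, wc_pyth, wc_pyth, Finset.mul_sum]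
    · refine Finset.sum_le_sum fun i _ => ?_
      have e1 : (T * V) (b.repr ξ i • b i) = b.repr ξ i • T (x (e i)) := by
        rw [map_smul, mul_apply_eq_comp, hV]
      rw [e1, norm_smul, norm_smul, b.orthonormal.1, mul_one, mul_pow, mul_comm]
      have := hxT (e i)
      gcongr
    · intro i j hij
      rw [map_smul, map_smul, inner_smul_left, inner_smul_right]
      have : inner ℂ ((T * V) (b i)) ((T * V) (b j)) = 0 := by
        change inner ℂ (T (V (b i))) (T (V (b j))) = 0
        rw [hV, hV]
        exact hor _ _ (fun h => hij (he h))
      rw [this]; simp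
    · intro i j hij
      rw [inner_smul_left, inner_smul_right, b.orthonormal.2 hij]; simp
  have hli : (T * V).HasLeftInverse := by
    have hal : AntilipschitzWith (ε⁻¹).toNNReal (T * V) := by
      refine ContinuousLinearMap.antilipschitz_of_bound _ fun ξ => ?_
      rw [Real.coe_toNNReal _ (by positivity), ← div_eq_inv_mul, le_div_iff₀ hε, mul_comm]
      exact hlow ξ
    have hcl : IsClosed (Set.range (T * V)) := hal.isClosed_range (T * V).uniformContinuous
    refine ContinuousLinearMap.HasLeftInverse.of_injective_of_isClosed_range_of_closedComplement_range
      hal.injective hcl ?_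
    have hcl' : IsClosed ((T * V).range : Set H) := hcl
    have := hcl'.completeSpace_coe
    exact ⟨(T * V).range.orthogonalProjectionOnto, fun y => Submodule.orthogonalProjectionOnto_mem_subspace_eq_self y⟩
  obtain ⟨A, hA⟩ := hli
  refine ⟨A, V, ?_⟩
  ext ξ
  exact hA ξ

theorem wc_closure_ideal {R : Type*} [Ring R] [TopologicalSpace R] [IsTopologicalRing R]
    {S : Set R} (hS : IsIdealSet S) : IsClosedIdealSet (closure S) := by
  obtain ⟨h0, ha, hn, hm⟩ := hS
  refine ⟨⟨subset_closure h0, fun x hx y hy => ?_, fun x hx => ?_, fun x hx a => ⟨?_, ?_⟩⟩,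
    isClosed_closure⟩
  · exact map_mem_closure₂ continuous_add hx hy (fun a h b h' => ha a h b h')
  · exact map_mem_closure continuous_neg hx (fun a h => hn a h)
  · exact map_mem_closure (continuous_const_mul a) hx (fun b h => (hm b h a).1)
  · exact map_mem_closure (f := fun y => y * a) (continuous_mul_const a) hx (fun b h => (hm b h a).2)

theorem wc_prime {R : Type*} [Ring R] [TopologicalSpace R] [IsTopologicalRing R]
    {M : Set R} (hM : IsMaxClosedIdealSet M) {h k : R} (hh : h ∈ centerSet R)
    (hkh : k * h = 0) (hhM : h ∉ M) : k ∈ M := by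
  obtain ⟨⟨⟨h0, ha, hn, hm⟩, hcl⟩, hne, hmax⟩ := hM
  let S : Set R := {r | ∃ m ∈ M, ∃ a, r = m + h * a}
  have hS : IsIdealSet S := by
    refine ⟨⟨0, h0, 0, by simp⟩, ?_, ?_, ?_⟩
    · rintro _ ⟨m, hm1, a, rfl⟩ _ ⟨m', hm', a', rfl⟩
      exact ⟨m + m', ha _ hm1 _ hm', a + a', by rw [mul_add]; abel⟩
    · rintro _ ⟨m, hm1, a, rfl⟩
      exact ⟨-m, hn _ hm1, -a, by rw [mul_neg]; abel⟩
    · rintro _ ⟨m, hm1, a, rfl⟩ b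
      refine ⟨⟨b * m, (hm _ hm1 b).1, b * a, ?_⟩, ⟨m * b, (hm _ hm1 b).2, a * b, ?_⟩⟩
      · rw [mul_add, ← mul_assoc, ← hh b, mul_assoc]
      · rw [add_mul, mul_assoc]
  have hMS : M ⊆ S := fun m hm => ⟨m, hm, 0, by simp⟩
  have hu : closure S = Set.univ := by
    rcases hmax _ (wc_closure_ideal hS) (hMS.trans subset_closure) with h1 | h1
    · exfalso
      apply hhM
      rw [← h1]
      exact subset_closure ⟨0, h0, 1, by simp⟩
    · exact h1
  have h1 : (1 : R) ∈ closure S := by rw [hu]; trivial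
  have h2 : k * 1 ∈ closure M := by
    refine map_mem_closure (continuous_const_mul k) h1 ?_
    rintro _ ⟨m, hm1, a, rfl⟩
    simp only [mul_add, ← mul_assoc, hkh, zero_mul, add_zero]
    exact (hm _ hm1 k).1
  rwa [mul_one, hcl.closure_eq] at h2

theorem wc_one_notMem {R : Type*} [Ring R] [TopologicalSpace R]
    {M : Set R} (hM : IsMaxClosedIdealSet M) : (1 : R) ∉ M := by
  intro h
  apply hM.2.1
  ext x
  simpa using (hM.1.1.2.2.2 1 h x).1

section
variable {H : Type*} [NormedAddCommGroup H] [InnerProductSpace ℂ H] [CompleteSpace H]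

/-- Scalar functions. -/
noncomputable def wcScal (H : Type*) [NormedAddCommGroup H] [InnerProductSpace ℂ H]
    (g : C(unitInterval, ℂ)) : C(unitInterval, H →L[ℂ] H) :=
  ⟨fun x => g x • (1 : H →L[ℂ] H), by fun_prop⟩

theorem wcScal_central (g : C(unitInterval, ℂ)) :
    wcScal H g ∈ centerSet C(unitInterval, H →L[ℂ] H) := by
  intro a
  ext x v
  simp [wcScal]

theorem wc_point {M : Set C(unitInterval, H →L[ℂ] H)} (hM : IsMaxClosedIdealSet M) :
    ∃ t, ∀ g, wcScal H g ∈ M → g t = 0 := by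
  let J : Ideal C(unitInterval, ℂ) :=
    { carrier := {g | wcScal H g ∈ M}
      add_mem' := by
        intro a b ha hb
        have : wcScal H (a + b) = wcScal H a + wcScal H b := by ext x v; simp [wcScal, add_smul]
        simp only [Set.mem_ofPred_eq] at *
        rw [this]
        exact hM.1.1.2.1 _ ha _ hb
      zero_mem' := by
        have : wcScal H 0 = 0 := by ext x v; simp [wcScal]
        simp only [Set.mem_ofPred_eq]
        rw [this]
        exact hM.1.1.1
      smul_mem' := by
        intro c a ha
        have : wcScal H (c • a) = wcScal H c * wcScal H a := by
          ext x v; simp [wcScal, smul_smul, mul_comm]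
        simp only [Set.mem_ofPred_eq] at *
        rw [this]
        exact (hM.1.1.2.2.2 _ ha _).1 }
  have hJ : J ≠ ⊤ := by
    intro h
    have h1 : (1 : C(unitInterval, ℂ)) ∈ J := by rw [h]; trivial
    have h2 : wcScal H 1 = 1 := by ext x v; simp [wcScal]
    have h3 : wcScal H 1 ∈ M := h1
    rw [h2] at h3
    exact wc_one_notMem hM h3
  obtain ⟨m, hm, hJm⟩ := Ideal.exists_le_maximal J hJ
  obtain ⟨t, ht⟩ := (ContinuousMap.ideal_isMaximal_iff m).mp hm
  refine ⟨t, fun g hg => ?_⟩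
  have : g ∈ m := hJm hg
  rwa [← ht, ContinuousMap.mem_idealOfSet_compl_singleton] at this

theorem wc_vanish {M : Set C(unitInterval, H →L[ℂ] H)} (hM : IsMaxClosedIdealSet M)
    {t : unitInterval} (ht : ∀ g, wcScal H g ∈ M → g t = 0)
    {f : C(unitInterval, H →L[ℂ] H)} (hf : f t = 0) : f ∈ M := by
  rw [← hM.1.2.closure_eq, Metric.mem_closure_iff]
  intro ε' hε'
  obtain ⟨ε, hε, hεε⟩ := exists_between hε'
  have hpos : ∀ x, max ‖f x‖ ε ≠ 0 := fun x => (lt_max_of_lt_right hε).ne'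
  let k : C(unitInterval, ℂ) := ⟨fun x => ((max 0 (ε - ‖f x‖) : ℝ) : ℂ), by fun_prop⟩
  let p : C(unitInterval, ℂ) := ⟨fun x => ((max 0 (‖f x‖ - ε) / max ‖f x‖ ε : ℝ) : ℂ),
    Complex.continuous_ofReal.comp (Continuous.div (by fun_prop) (by fun_prop) hpos)⟩
  have hk : wcScal H k ∉ M := by
    intro h
    have h1 := ht k h
    have h2 : k t = ((max 0 (ε - ‖f t‖) : ℝ) : ℂ) := rfl
    rw [h2, hf] at h1
    simp only [norm_zero, sub_zero, Complex.ofReal_eq_zero, max_eq_right hε.le] at h1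
    exact hε.ne' h1
  have hpk : wcScal H p * wcScal H k = 0 := by
    have hz : ∀ x, p x * k x = 0 := by
      intro x
      change ((_ : ℝ) : ℂ) * ((_ : ℝ) : ℂ) = 0
      rw [← Complex.ofReal_mul, Complex.ofReal_eq_zero]
      rcases le_total ‖f x‖ ε with h | h
      · rw [max_eq_left (by linarith : ‖f x‖ - ε ≤ 0)]; simp
      · rw [max_eq_left (by linarith : ε - ‖f x‖ ≤ 0)]; simp
    ext x v
    have h := mul_eq_zero.mp (hz x)
    simp [wcScal, smul_smul]
    tauto
  have hp := wc_prime hM (wcScal_central k) hpk hk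
  refine ⟨wcScal H p * f, (hM.1.1.2.2.2 _ hp f).2, lt_of_le_of_lt ?_ hεε⟩
  rw [ContinuousMap.dist_le hε.le]
  intro x
  have e : f x - (wcScal H p * f) x = ((1 - max 0 (‖f x‖ - ε) / max ‖f x‖ ε : ℝ) : ℂ) • f x := by
    have : (wcScal H p * f) x = ((max 0 (‖f x‖ - ε) / max ‖f x‖ ε : ℝ) : ℂ) • f x := by
      ext v; simp [wcScal, p]
    rw [this, Complex.ofReal_sub, sub_smul, Complex.ofReal_one, one_smul]
  rw [dist_eq_norm, e, norm_smul, Complex.norm_real, Real.norm_eq_abs]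
  rcases le_total ‖f x‖ ε with h | h
  · rw [max_eq_left (by linarith : ‖f x‖ - ε ≤ 0)]; simpa using h
  · have h0 : 0 < ‖f x‖ := hε.trans_le h
    rw [max_eq_right (by linarith : 0 ≤ ‖f x‖ - ε), max_eq_left h]
    have : 1 - (‖f x‖ - ε) / ‖f x‖ = ε / ‖f x‖ := by field_simp; ring
    rw [this, abs_of_nonneg (by positivity), div_mul_cancel₀ _ h0.ne']

theorem wc_eq_compact [TopologicalSpace.SeparableSpace H] (hinf : ¬ FiniteDimensional ℂ H)
    {M : Set C(unitInterval, H →L[ℂ] H)} (hM : IsMaxClosedIdealSet M)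
    {t : unitInterval} (ht : ∀ g, wcScal H g ∈ M → g t = 0) :
    M = {f | IsCompactOperator (f t)} := by
  have hsub : M ⊆ {f | IsCompactOperator (f t)} := by
    intro f hf
    by_contra hc
    obtain ⟨A, B, hAB⟩ := wc_left_inv (f t) hc
    have h1 : ContinuousMap.const _ A * f * ContinuousMap.const _ B ∈ M :=
      (hM.1.1.2.2.2 _ (hM.1.1.2.2.2 f hf (ContinuousMap.const _ A)).1 _).2
    have h2 : 1 - ContinuousMap.const _ A * f * ContinuousMap.const _ B ∈ M := by
      apply wc_vanish hM ht
      change 1 - A * f t * B = 0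
      rw [hAB, sub_self]
    have h3 := hM.1.1.2.1 _ h2 _ h1
    rw [sub_add_cancel] at h3
    exact wc_one_notMem hM h3
  have hK : IsClosedIdealSet {f : C(unitInterval, H →L[ℂ] H) | IsCompactOperator (f t)} := by
    refine ⟨⟨isCompactOperator_zero, fun x hx y hy => hx.add hy, fun x hx => hx.neg,
      fun x hx a => ⟨hx.clm_comp (a t), hx.comp_clm (a t)⟩⟩, ?_⟩
    exact (isClosed_setOfPred_isCompactOperator (σ₁₂ := RingHom.id ℂ) (M₁ := H)
      (M₂ := H)).preimage (continuous_eval_const t)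
  rcases hM.2.2 _ hK hsub with h | h
  · exact h.symm
  · exfalso
    have h1 : (1 : C(unitInterval, H →L[ℂ] H)) ∈
      {f : C(unitInterval, H →L[ℂ] H) | IsCompactOperator (f t)} := by rw [h]; trivial
    have h2 : IsCompactOperator (id : H → H) := h1
    rw [isCompactOperator_id_iff_locallyCompactSpace] at h2
    exact hinf (FiniteDimensional.of_locallyCompactSpace ℂ)

end

open TopologicalSpace in
/-- **`C([0,1], B(H))` is weakly central** for an infinite-dimensional separable complex
Hilbert space `H`. -/
theorem weaklyCentral_continuousMap_boundedOperators
    {H : Type*} [NormedAddCommGroup H] [InnerProductSpace ℂ H] [CompleteSpace H]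
    [SeparableSpace H] (hinf : ¬ FiniteDimensional ℂ H) :
    WeaklyCentral C(unitInterval, H →L[ℂ] H) := by
  refine ⟨fun M hM h => wc_one_notMem hM (h fun a => by simp), fun M N hM hN hMN => ?_⟩
  obtain ⟨t, ht⟩ := wc_point hM
  obtain ⟨s, hs⟩ := wc_point hN
  let g : C(unitInterval, ℂ) := ⟨fun x => (((x : ℝ) - t : ℝ) : ℂ), by fun_prop⟩
  have hg : wcScal H g ∈ M := by
    apply wc_vanish hM ht
    simp [wcScal, g]
  have hg' : wcScal H g ∈ N := by
    have : wcScal H g ∈ M ∩ centerSet _ := ⟨hg, wcScal_central g⟩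
    rw [hMN] at this
    exact this.1
  have hst : s = t := by
    have h1 : (((s : ℝ) - t : ℝ) : ℂ) = 0 := hs g hg'
    rw [Complex.ofReal_eq_zero, sub_eq_zero] at h1
    exact Subtype.ext h1
  subst hst
  rw [wc_eq_compact hinf hM ht, wc_eq_compact hinf hN hs]
end

section
/- Let H be a separable infinite-dimensional complex Hilbert space, let K(H) ⊆ B(H) be the compact operators, and let p ∈ B(H) be an orthogonal projection whose range and kernel are both infinite-dimensional. Let A = {K + α·p + β·(1−p) : K ∈ K(H), α, β ∈ ℂ} ⊆ B(H). Then A is a unital C*-subalgebra of B(H), and its maximal closed two-sided ideals are exactly the two ideals K(H) + ℂ·p and K(H) + ℂ·(1−p); in particular A has exactly two maximal closed two-sided ideals. -/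
section RelativeDefs
variable {R : Type*}

/-- A closed two-sided ideal of the subalgebra `𝒜 ⊆ R`, as a subset of `R`. -/
def IsClosedIdealIn [NonUnitalNonAssocRing R] [TopologicalSpace R] (𝒜 M : Set R) : Prop :=
  M ⊆ 𝒜 ∧ (0 : R) ∈ M ∧ (∀ x ∈ M, ∀ y ∈ M, x + y ∈ M) ∧ (∀ x ∈ M, -x ∈ M) ∧
    (∀ x ∈ M, ∀ a ∈ 𝒜, a * x ∈ M ∧ x * a ∈ M) ∧ IsClosed M

/-- A maximal (proper) closed two-sided ideal of the subalgebra `𝒜 ⊆ R`. -/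
def IsMaxClosedIdealIn [NonUnitalNonAssocRing R] [TopologicalSpace R] (𝒜 M : Set R) : Prop :=
  IsClosedIdealIn 𝒜 M ∧ M ≠ 𝒜 ∧
    ∀ T : Set R, IsClosedIdealIn 𝒜 T → M ⊆ T → T = M ∨ T = 𝒜

/-- A two-sided ideal of the subalgebra `𝒜 ⊆ R` (no closedness). -/
def IsIdealIn [NonUnitalNonAssocRing R] (𝒜 M : Set R) : Prop :=
  M ⊆ 𝒜 ∧ (0 : R) ∈ M ∧ (∀ x ∈ M, ∀ y ∈ M, x + y ∈ M) ∧ (∀ x ∈ M, -x ∈ M) ∧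
    ∀ x ∈ M, ∀ a ∈ 𝒜, a * x ∈ M ∧ x * a ∈ M

/-- A maximal (proper) two-sided ideal of the subalgebra `𝒜 ⊆ R`. -/
def IsMaxIdealIn [NonUnitalNonAssocRing R] (𝒜 M : Set R) : Prop :=
  IsIdealIn 𝒜 M ∧ M ≠ 𝒜 ∧ ∀ T : Set R, IsIdealIn 𝒜 T → M ⊆ T → T = M ∨ T = 𝒜

/-- The center of the subalgebra `𝒜 ⊆ R`, as a subset of `R`. -/
def centerIn [Mul R] (𝒜 : Set R) : Set R := {z ∈ 𝒜 | ∀ a ∈ 𝒜, z * a = a * z}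

/-- Weak centrality of the subalgebra `𝒜 ⊆ R`: no maximal closed two-sided ideal of `𝒜`
contains the center of `𝒜`, and `M ↦ M ∩ Z(𝒜)` is injective on maximal closed two-sided
ideals of `𝒜`. -/
def WeaklyCentralIn [NonUnitalNonAssocRing R] [TopologicalSpace R] (𝒜 : Set R) : Prop :=
  (∀ M : Set R, IsMaxClosedIdealIn 𝒜 M → ¬ centerIn 𝒜 ⊆ M) ∧
    ∀ M N : Set R, IsMaxClosedIdealIn 𝒜 M → IsMaxClosedIdealIn 𝒜 N →
      M ∩ centerIn 𝒜 = N ∩ centerIn 𝒜 → M = N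

end RelativeDefs

namespace CompTwo

set_option linter.unusedSectionVars false

variable {H : Type*} [NormedAddCommGroup H] [InnerProductSpace ℂ H] [CompleteSpace H]

/-- The algebra. -/
def AA (p q : H →L[ℂ] H) : Set (H →L[ℂ] H) :=
  {T | ∃ K : H →L[ℂ] H, ∃ α β : ℂ, IsCompactOperator K ∧ T = K + α • p + β • q}

/-- The ideal. -/
def NN (p : H →L[ℂ] H) : Set (H →L[ℂ] H) :=
  {T | ∃ K : H →L[ℂ] H, ∃ α : ℂ, IsCompactOperator K ∧ T = K + α • p}

/-- Complementary noncompact idempotents. -/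
structure Pair (p q : H →L[ℂ] H) : Prop where
  pp : p * p = p
  qq : q * q = q
  pq : p * q = 0
  qp : q * p = 0
  sum : p + q = 1
  np : ¬ IsCompactOperator p
  nq : ¬ IsCompactOperator q

lemma Pair.symm {p q : H →L[ℂ] H} (h : Pair p q) : Pair q p :=
  ⟨h.qq, h.pp, h.qp, h.pq, by rw [add_comm]; exact h.sum, h.nq, h.np⟩

lemma AA_comm (p q : H →L[ℂ] H) : AA p q = AA q p := by
  ext T
  constructor
  · rintro ⟨K, α, β, hK, rfl⟩
    exact ⟨K, β, α, hK, by abel⟩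
  · rintro ⟨K, α, β, hK, rfl⟩
    exact ⟨K, β, α, hK, by abel⟩

lemma NN_closed (p : H →L[ℂ] H) : IsClosed (NN p) := by
  have h := Submodule.isClosed_sup_finiteDimensional
    (compactOperator (RingHom.id ℂ) H H) (Submodule.span ℂ {p})
    isClosed_setOfPred_isCompactOperator
  convert h using 1
  ext T
  simp only [SetLike.mem_coe, Submodule.mem_sup, Submodule.mem_span_singleton]
  constructor
  · rintro ⟨K, α, hK, rfl⟩
    exact ⟨K, hK, _, ⟨α, rfl⟩, rfl⟩
  · rintro ⟨K, hK, _, ⟨α, rfl⟩, rfl⟩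
    exact ⟨K, α, hK, rfl⟩

lemma AA_closed (p q : H →L[ℂ] H) : IsClosed (AA p q) := by
  have h0 := Submodule.isClosed_sup_finiteDimensional
    (compactOperator (RingHom.id ℂ) H H) (Submodule.span ℂ {p})
    isClosed_setOfPred_isCompactOperator
  have h := Submodule.isClosed_sup_finiteDimensional _ (Submodule.span ℂ {q}) h0
  convert h using 1
  ext T
  simp only [SetLike.mem_coe, Submodule.mem_sup, Submodule.mem_span_singleton]
  constructor
  · rintro ⟨K, α, β, hK, rfl⟩
    exact ⟨_, ⟨K, hK, _, ⟨α, rfl⟩, rfl⟩, _, ⟨β, rfl⟩, rfl⟩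
  · rintro ⟨_, ⟨K, hK, _, ⟨α, rfl⟩, rfl⟩, _, ⟨β, rfl⟩, rfl⟩
    exact ⟨K, α, β, hK, rfl⟩

lemma cadd {K L : H →L[ℂ] H} (hK : IsCompactOperator K) (hL : IsCompactOperator L) :
    IsCompactOperator (K + L : H →L[ℂ] H) := hK.add hL

lemma csub {K L : H →L[ℂ] H} (hK : IsCompactOperator K) (hL : IsCompactOperator L) :
    IsCompactOperator (K - L : H →L[ℂ] H) := hK.sub hL

lemma csmul {K : H →L[ℂ] H} (c : ℂ) (hK : IsCompactOperator K) :
    IsCompactOperator (c • K : H →L[ℂ] H) := hK.smul c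

lemma cneg {K : H →L[ℂ] H} (hK : IsCompactOperator K) :
    IsCompactOperator (-K : H →L[ℂ] H) := hK.neg

lemma cmul_left {K : H →L[ℂ] H} (L : H →L[ℂ] H) (hK : IsCompactOperator K) :
    IsCompactOperator (L * K : H →L[ℂ] H) := hK.clm_comp L

lemma cmul_right {K : H →L[ℂ] H} (L : H →L[ℂ] H) (hK : IsCompactOperator K) :
    IsCompactOperator (K * L : H →L[ℂ] H) := hK.comp_clm L

lemma czero : IsCompactOperator (0 : H →L[ℂ] H) := isCompactOperator_zero

lemma crank (x y : H) : IsCompactOperator (InnerProductSpace.rankOne ℂ x y : H →L[ℂ] H) := by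
  rw [InnerProductSpace.rankOne_def']
  exact (isCompactOperator_of_locallyCompactSpace_dom (innerSL ℂ y)).clm_comp
    (ContinuousLinearMap.toSpanSingleton ℂ x)

lemma cproj (F : Submodule ℂ H) [FiniteDimensional ℂ F] :
    IsCompactOperator (F.starProjection : H →L[ℂ] H) := by
  rw [(stdOrthonormalBasis ℂ F).starProjection_eq_sum_rankOne]
  exact (compactOperator (RingHom.id ℂ) H H).sum_mem fun i _ => crank _ _

lemma approx {K : H →L[ℂ] H} (hK : IsCompactOperator K) {ε : ℝ} (hε : 0 < ε) :
    ∃ F : Submodule ℂ H, ∃ _ : FiniteDimensional ℂ F, ‖K - F.starProjection * K‖ ≤ ε := by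
  have hc := (IsCompactOperator.isCompact_closure_image_closedBall (𝕜₁ := ℂ)
    (f := (K : H →ₗ[ℂ] H)) hK 1).totallyBounded
  obtain ⟨t, ht, hcov⟩ := Metric.totallyBounded_iff.1 hc (ε / 2) (by positivity)
  have : Finite t := ht
  refine ⟨Submodule.span ℂ t, FiniteDimensional.span_of_finite ℂ ht, ?_⟩
  have := FiniteDimensional.span_of_finite ℂ ht
  refine ContinuousLinearMap.opNorm_le_of_unit_norm hε.le ?_
  intro x hx
  have hx' : K x ∈ closure ((K : H →ₗ[ℂ] H) '' Metric.closedBall 0 1) :=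
    subset_closure ⟨x, by simp [hx], rfl⟩
  obtain ⟨z, hz, hd⟩ := Set.mem_iUnion₂.1 (hcov hx')
  rw [Metric.mem_ball, dist_eq_norm] at hd
  set P := (Submodule.span ℂ t).starProjection
  have hPz : P z = z := Submodule.starProjection_eq_self_iff.2 (Submodule.subset_span hz)
  have h1 : (K - P * K) x = (K x - z) - P (K x - z) := by
    simp [hPz]
  rw [h1]
  have h2 : ‖P (K x - z)‖ ≤ ‖K x - z‖ := Submodule.norm_starProjection_apply_le _ _
  have h3 := norm_sub_le (K x - z) (P (K x - z))
  linarith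

lemma cstar {K : H →L[ℂ] H} (hK : IsCompactOperator K) :
    IsCompactOperator (star K : H →L[ℂ] H) := by
  have hcl : IsClosed {f : H →L[ℂ] H | IsCompactOperator f} :=
    isClosed_setOfPred_isCompactOperator
  have : star K ∈ closure {f : H →L[ℂ] H | IsCompactOperator f} := by
    rw [Metric.mem_closure_iff]
    intro ε hε
    obtain ⟨F, hF, h⟩ := approx hK (half_pos hε)
    refine ⟨star (F.starProjection * K), ?_, ?_⟩
    · rw [star_mul, (isSelfAdjoint_starProjection F).star_eq]
      exact cmul_left _ (cproj F)
    · rw [dist_eq_norm, ← star_sub, norm_star]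
      linarith
  rwa [hcl.closure_eq] at this

lemma compact_mem_AA {p q K : H →L[ℂ] H} (hK : IsCompactOperator K) : K ∈ AA p q :=
  ⟨K, 0, 0, hK, by simp⟩

lemma left_mem_AA (p q : H →L[ℂ] H) : p ∈ AA p q := ⟨0, 1, 0, czero, by simp⟩

lemma right_mem_AA (p q : H →L[ℂ] H) : q ∈ AA p q := ⟨0, 0, 1, czero, by simp⟩

lemma Pair.one_mem {p q : H →L[ℂ] H} (h : Pair p q) : 1 ∈ AA p q :=
  ⟨0, 1, 1, czero, by simp [h.sum]⟩

lemma Pair.mul_mem {p q x y : H →L[ℂ] H} (h : Pair p q) (hx : x ∈ AA p q) (hy : y ∈ AA p q) :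
    x * y ∈ AA p q := by
  obtain ⟨K, α, β, hK, rfl⟩ := hx
  obtain ⟨L, γ, δ, hL, rfl⟩ := hy
  refine ⟨K * (L + γ • p + δ • q) + (α • p + β • q) * L, α * γ, β * δ,
    cadd (cmul_right _ hK) (cmul_left _ hL), ?_⟩
  simp only [add_mul, mul_add, smul_mul_assoc, mul_smul_comm, h.pp, h.qq, h.pq, h.qp, smul_zero,
    smul_smul]
  module

lemma add_mem_AA {p q x y : H →L[ℂ] H} (hx : x ∈ AA p q) (hy : y ∈ AA p q) :
    x + y ∈ AA p q := by
  obtain ⟨K, α, β, hK, rfl⟩ := hx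
  obtain ⟨L, γ, δ, hL, rfl⟩ := hy
  exact ⟨K + L, α + γ, β + δ, cadd hK hL, by module⟩

lemma smul_mem_AA {p q x : H →L[ℂ] H} (c : ℂ) (hx : x ∈ AA p q) : c • x ∈ AA p q := by
  obtain ⟨K, α, β, hK, rfl⟩ := hx
  exact ⟨c • K, c * α, c * β, csmul c hK, by module⟩

/-- In a pair, a combination lying in the wrong ideal has zero coefficient. -/
lemma Pair.coeff {p q K : H →L[ℂ] H} (h : Pair p q) (hK : IsCompactOperator K) {α β : ℂ}
    (hm : K + α • p + β • q ∈ NN q) : α = 0 := by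
  obtain ⟨L, γ, hL, e⟩ := hm
  by_contra hα
  apply h.np
  have e2 : p * K + α • p = p * L := by
    have := congrArg (p * ·) e
    simpa [mul_add, h.pp, h.pq] using this
  have e3 : p = α⁻¹ • (p * L - p * K) := by
    rw [← e2, add_sub_cancel_left, smul_smul, inv_mul_cancel₀ hα, one_smul]
  rw [e3]
  exact csmul _ (csub (cmul_left _ hL) (cmul_left _ hK))

lemma Pair.not_mem {p q : H →L[ℂ] H} (h : Pair p q) : p ∉ NN q := by
  intro hp
  have := h.coeff (K := 0) czero (α := 1) (β := 0) (by simpa using hp)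
  exact one_ne_zero this

lemma NN_sub_AA (p q : H →L[ℂ] H) : NN p ⊆ AA p q := by
  rintro _ ⟨K, α, hK, rfl⟩
  exact ⟨K, α, 0, hK, by simp⟩

lemma Pair.NN_ideal {p q : H →L[ℂ] H} (h : Pair p q) : IsClosedIdealIn (AA p q) (NN p) := by
  refine ⟨NN_sub_AA p q, ⟨0, 0, czero, by simp⟩, ?_, ?_, ?_, NN_closed p⟩
  · rintro _ ⟨K, α, hK, rfl⟩ _ ⟨L, γ, hL, rfl⟩
    exact ⟨K + L, α + γ, cadd hK hL, by module⟩
  · rintro _ ⟨K, α, hK, rfl⟩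
    exact ⟨-K, -α, cneg hK, by module⟩
  · rintro _ ⟨K, α, hK, rfl⟩ _ ⟨L, γ, δ, hL, rfl⟩
    constructor
    · refine ⟨(L + γ • p + δ • q) * K + L * (α • p), γ * α,
        cadd (cmul_left _ hK) (cmul_right _ hL), ?_⟩
      simp only [add_mul, mul_add, smul_mul_assoc, mul_smul_comm, h.pp, h.qp, smul_zero, smul_smul]
      module
    · refine ⟨K * (L + γ • p + δ • q) + (α • p) * L, α * γ,
        cadd (cmul_right _ hK) (cmul_left _ hL), ?_⟩
      simp only [add_mul, mul_add, smul_mul_assoc, mul_smul_comm, h.pp, h.pq, smul_zero, smul_smul]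
      module

lemma Pair.NN_ne {p q : H →L[ℂ] H} (h : Pair p q) : NN p ≠ AA p q := by
  intro e
  exact h.symm.not_mem (e ▸ right_mem_AA p q)

lemma Pair.smul_mem {p q : H →L[ℂ] H} (h : Pair p q) {M : Set (H →L[ℂ] H)}
    (hM : IsClosedIdealIn (AA p q) M) (c : ℂ) {x : H →L[ℂ] H} (hx : x ∈ M) : c • x ∈ M := by
  have := (hM.2.2.2.2.1 x hx (c • 1) (smul_mem_AA c h.one_mem)).1
  simpa using this

lemma Pair.eq_top {p q : H →L[ℂ] H} (h : Pair p q) {M : Set (H →L[ℂ] H)}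
    (hM : IsClosedIdealIn (AA p q) M) (hp : p ∈ M) (hq : q ∈ M) : M = AA p q := by
  refine Set.Subset.antisymm hM.1 fun a ha => ?_
  have h1 : (1 : H →L[ℂ] H) ∈ M := h.sum ▸ hM.2.2.1 p hp q hq
  simpa using (hM.2.2.2.2.1 1 h1 a ha).1

/-- If a closed ideal contains the compacts and an element with nonzero coefficient at `p`,
it contains `p`. -/
lemma Pair.mem_of_coeff {p q : H →L[ℂ] H} (h : Pair p q) {M : Set (H →L[ℂ] H)}
    (hM : IsClosedIdealIn (AA p q) M) (hc : ∀ K : H →L[ℂ] H, IsCompactOperator K → K ∈ M)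
    {K : H →L[ℂ] H} (hK : IsCompactOperator K) {α β : ℂ} (hα : α ≠ 0)
    (hx : K + α • p + β • q ∈ M) : p ∈ M := by
  have h1 := (hM.2.2.2.2.1 _ hx p (left_mem_AA p q)).1
  have h2 := hM.2.2.1 _ h1 _ (hc _ (cneg (cmul_left p hK)))
  have h3 : p * (K + α • p + β • q) + -(p * K) = α • p := by
    simp [mul_add, h.pp, h.pq]
  rw [h3] at h2
  have := h.smul_mem hM α⁻¹ h2
  rwa [smul_smul, inv_mul_cancel₀ hα, one_smul] at this

/-- A nonzero closed ideal contains the compacts. -/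
lemma Pair.compact_mem {p q : H →L[ℂ] H} (h : Pair p q) {M : Set (H →L[ℂ] H)}
    (hM : IsClosedIdealIn (AA p q) M) {m : H →L[ℂ] H} (hm : m ∈ M) (hm0 : m ≠ 0)
    {K : H →L[ℂ] H} (hK : IsCompactOperator K) : K ∈ M := by
  obtain ⟨u, hu⟩ : ∃ u, m u ≠ 0 := by
    by_contra hcon
    push Not at hcon
    exact hm0 (ContinuousLinearMap.ext hcon)
  have hr : ∀ x y : H, (InnerProductSpace.rankOne ℂ x y : H →L[ℂ] H) ∈ M := by
    intro x y
    have h1 := (hM.2.2.2.2.1 _ hm _ (compact_mem_AA (crank x (m u)))).1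
    have h2 := (hM.2.2.2.2.1 _ h1 _ (compact_mem_AA (crank u y))).2
    have h3 := h.smul_mem hM (inner ℂ (m u) (m u))⁻¹ h2
    have hne : inner ℂ (m u) (m u) ≠ 0 := inner_self_ne_zero.2 hu
    convert h3 using 1
    ext z
    simp only [InnerProductSpace.rankOne_apply, ContinuousLinearMap.smul_apply,
      ContinuousLinearMap.mul_apply, map_smul, inner_smul_right, smul_smul]
    congr 1
    field_simp
  have hP : ∀ F : Submodule ℂ H, ∀ _ : FiniteDimensional ℂ F,
      (F.starProjection : H →L[ℂ] H) ∈ M := by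
    intro F hF
    rw [(stdOrthonormalBasis ℂ F).starProjection_eq_sum_rankOne]
    exact Finset.sum_induction _ (· ∈ M) (fun a b ha hb => hM.2.2.1 a ha b hb) hM.2.1
      fun i _ => hr _ _
  have hcl : IsClosed M := hM.2.2.2.2.2
  rw [← hcl.closure_eq, Metric.mem_closure_iff]
  intro ε hε
  obtain ⟨F, hF, hb⟩ := approx hK (half_pos hε)
  refine ⟨F.starProjection * K, (hM.2.2.2.2.1 _ (hP F hF) K (compact_mem_AA hK)).2, ?_⟩
  rw [dist_eq_norm]
  linarith

lemma Pair.NN_max {p q : H →L[ℂ] H} (h : Pair p q) : IsMaxClosedIdealIn (AA p q) (NN p) := by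
  refine ⟨h.NN_ideal, h.NN_ne, fun T hT hle => ?_⟩
  by_cases hTN : T ⊆ NN p
  · exact Or.inl (Set.Subset.antisymm hTN hle)
  right
  obtain ⟨x, hx, hxN⟩ := Set.not_subset.1 hTN
  obtain ⟨K, α, β, hK, rfl⟩ := hT.1 hx
  have hβ : β ≠ 0 := by
    rintro rfl
    exact hxN ⟨K, α, hK, by simp⟩
  have hp : p ∈ T := hle ⟨0, 1, czero, by simp⟩
  have hc : ∀ K : H →L[ℂ] H, IsCompactOperator K → K ∈ T := fun K hK => hle ⟨K, 0, hK, by simp⟩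
  have hq : q ∈ T := by
    refine h.symm.mem_of_coeff (AA_comm p q ▸ hT) hc hK hβ (β := α) ?_
    rwa [add_right_comm]
  exact h.eq_top hT hp hq

lemma Pair.max_iff {p q : H →L[ℂ] H} (h : Pair p q) (M : Set (H →L[ℂ] H)) :
    IsMaxClosedIdealIn (AA p q) M ↔ M = NN p ∨ M = NN q := by
  have hq' := h.symm.NN_max
  rw [AA_comm] at hq'
  constructor
  · intro hM
    by_cases h1 : M ⊆ NN p
    · exact Or.inl ((hM.2.2 _ h.NN_ideal h1).resolve_right h.NN_ne).symm
    by_cases h2 : M ⊆ NN q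
    · exact Or.inr ((hM.2.2 _ hq'.1 h2).resolve_right hq'.2.1).symm
    exfalso
    obtain ⟨x, hx, hxN⟩ := Set.not_subset.1 h1
    obtain ⟨y, hy, hyN⟩ := Set.not_subset.1 h2
    have hx0 : x ≠ 0 := by
      rintro rfl
      exact hxN ⟨0, 0, czero, by simp⟩
    have hc : ∀ K : H →L[ℂ] H, IsCompactOperator K → K ∈ M :=
      fun K hK => h.compact_mem hM.1 hx hx0 hK
    obtain ⟨K, α, β, hK, rfl⟩ := hM.1.1 hx
    obtain ⟨L, γ, δ, hL, rfl⟩ := hM.1.1 hy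
    have hβ : β ≠ 0 := by
      rintro rfl
      exact hxN ⟨K, α, hK, by simp⟩
    have hγ : γ ≠ 0 := by
      rintro rfl
      exact hyN ⟨L, δ, hL, by simp⟩
    refine hM.2.1 (h.eq_top hM.1 (h.mem_of_coeff hM.1 hc hL hγ hy) ?_)
    refine h.symm.mem_of_coeff (AA_comm p q ▸ hM.1) hc hK hβ (β := α) ?_
    rwa [add_right_comm]
  · rintro (rfl | rfl)
    · exact h.NN_max
    · exact hq'

/-- The star subalgebra. -/
lemma Pair.star_alg {p q : H →L[ℂ] H} (h : Pair p q) (hp : star p = p) (hq : star q = q) :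
    ∃ S : StarSubalgebra ℂ (H →L[ℂ] H), (S : Set (H →L[ℂ] H)) = AA p q := by
  refine ⟨{ carrier := AA p q
            mul_mem' := h.mul_mem
            add_mem' := add_mem_AA
            algebraMap_mem' := fun c => ?_
            star_mem' := ?_ }, rfl⟩
  · rw [Algebra.algebraMap_eq_smul_one]
    exact smul_mem_AA c h.one_mem
  · rintro _ ⟨K, α, β, hK, rfl⟩
    exact ⟨star K, star α, star β, cstar hK, by simp [star_add, star_smul, hp, hq]⟩

lemma mk_pair {p : H →L[ℂ] H} (hidem : p * p = p)
    (hrange : ¬ FiniteDimensional ℂ (LinearMap.range (p : H →ₗ[ℂ] H)))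
    (hker : ¬ FiniteDimensional ℂ (LinearMap.ker (p : H →ₗ[ℂ] H))) : Pair p (1 - p) := by
  have hpp : ∀ x, p (p x) = p x := fun x => congrArg (fun f : H →L[ℂ] H => f x) hidem
  refine ⟨hidem, by simp [mul_sub, sub_mul, hidem], by simp [mul_sub, hidem],
    by simp [sub_mul, hidem], by simp, fun hc => hrange ?_, fun hc => hker ?_⟩
  · have := ContinuousLinearMap.finite_dimensional_eigenspace hc 1 one_ne_zero
    refine Submodule.finiteDimensional_of_le (S₂ := Module.End.eigenspace (p : H →ₗ[ℂ] H) 1) ?_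
    rintro _ ⟨x, rfl⟩
    simp [Module.End.mem_eigenspace_iff, hpp]
  · have := ContinuousLinearMap.finite_dimensional_eigenspace hc 1 one_ne_zero
    refine Submodule.finiteDimensional_of_le
      (S₂ := Module.End.eigenspace ((1 - p : H →L[ℂ] H) : H →ₗ[ℂ] H) 1) ?_
    intro x hx
    have hx' : p x = 0 := hx
    simp [Module.End.mem_eigenspace_iff, hx']

end CompTwo

open TopologicalSpace in
/-- **The maximal ideals of `K(H) + ℂp + ℂ(1-p)`.**
Let `H` be a separable infinite-dimensional Hilbert space, `p` an orthogonal projection with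
infinite-dimensional range and kernel, and
`𝒜 = {K + α•p + β•(1-p) : K compact, α β ∈ ℂ} ⊆ B(H)`.  Then `𝒜` is a unital
C*-subalgebra of `B(H)` and its maximal closed two-sided ideals are exactly
`K(H) + ℂ·p` and `K(H) + ℂ·(1-p)`; in particular there are exactly two of them. -/
theorem maximal_ideals_of_compacts_plus_two_scalars
    {H : Type*} [NormedAddCommGroup H] [InnerProductSpace ℂ H] [CompleteSpace H]
    [SeparableSpace H] (hinf : ¬ FiniteDimensional ℂ H)
    (p : H →L[ℂ] H) (hsa : star p = p) (hidem : p * p = p)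
    (hrange : ¬ FiniteDimensional ℂ (LinearMap.range (p : H →ₗ[ℂ] H)))
    (hker : ¬ FiniteDimensional ℂ (LinearMap.ker (p : H →ₗ[ℂ] H))) :
    (∃ S : StarSubalgebra ℂ (H →L[ℂ] H),
        (S : Set (H →L[ℂ] H)) =
          {T | ∃ K : H →L[ℂ] H, ∃ α β : ℂ,
            IsCompactOperator K ∧ T = K + α • p + β • (1 - p)} ∧
        IsClosed (S : Set (H →L[ℂ] H))) ∧
    ({T : H →L[ℂ] H | ∃ K : H →L[ℂ] H, ∃ α : ℂ, IsCompactOperator K ∧ T = K + α • p} ≠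
      {T : H →L[ℂ] H | ∃ K : H →L[ℂ] H, ∃ β : ℂ, IsCompactOperator K ∧ T = K + β • (1 - p)}) ∧
    ∀ M : Set (H →L[ℂ] H),
      IsMaxClosedIdealIn
        {T | ∃ K : H →L[ℂ] H, ∃ α β : ℂ,
          IsCompactOperator K ∧ T = K + α • p + β • (1 - p)} M ↔
        (M = {T | ∃ K : H →L[ℂ] H, ∃ α : ℂ, IsCompactOperator K ∧ T = K + α • p} ∨
         M = {T | ∃ K : H →L[ℂ] H, ∃ β : ℂ, IsCompactOperator K ∧ T = K + β • (1 - p)}) := by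
  have h := CompTwo.mk_pair hidem hrange hker
  refine ⟨?_, ?_, h.max_iff⟩
  · obtain ⟨S, hS⟩ := h.star_alg hsa (by rw [star_sub, star_one, hsa])
    exact ⟨S, hS, hS ▸ CompTwo.AA_closed p (1 - p)⟩
  · intro e
    have e' : CompTwo.NN p = CompTwo.NN (1 - p) := e
    exact h.not_mem (e' ▸ (⟨0, 1, CompTwo.czero, by simp⟩ : p ∈ CompTwo.NN p))
end

section
/- Let 𝕋 ⊆ ℂ be the unit circle and let A be the set of continuous functions f : 𝕋 × [0,1] → M₂(ℂ) such that for every z ∈ 𝕋 and every t ∈ {0,1} there exist a, b ∈ ℂ with f(z,t) = [[a, z·b],[b, a]] (i.e. entries f(z,t)₁₁ = f(z,t)₂₂ and f(z,t)₁₂ = z·f(z,t)₂₁). Then A is a unital C*-subalgebra of C(𝕋 × [0,1], M₂(ℂ)) and A is not weakly central. -/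
/-- The unit circle in `ℂ`. -/
abbrev UnitCircle : Type := {z : ℂ // ‖z‖ = 1}

/-- The cylinder `𝕋 × [0,1]`. -/
abbrev Cylinder : Type := UnitCircle × unitInterval

/-- The C*-algebra of the wallpaper group, realized inside `C(𝕋 × [0,1], M₂(ℂ))`:
continuous matrix-valued functions whose values at `(z, 0)` and `(z, 1)` have the form
`[[a, z·b], [b, a]]`. -/
def WallpaperAlg : Set C(Cylinder, Matrix (Fin 2) (Fin 2) ℂ) :=
  {f | ∀ z : UnitCircle, ∀ t : unitInterval, (t = 0 ∨ t = 1) →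
    ∃ a b : ℂ, f (z, t) = !![a, (z : ℂ) * b; b, a]}

abbrev WA := C(Cylinder, Matrix (Fin 2) (Fin 2) ℂ)

lemma mem_wa (f : WA) : f ∈ WallpaperAlg ↔ ∀ z : UnitCircle, ∀ t : unitInterval,
    (t = 0 ∨ t = 1) → f (z, t) 0 0 = f (z, t) 1 1 ∧ f (z, t) 0 1 = (z : ℂ) * f (z, t) 1 0 := by
  constructor
  · intro h z t ht
    obtain ⟨a, b, hab⟩ := h z t ht
    simp [hab]
  · intro h z t ht
    obtain ⟨h1, h2⟩ := h z t ht
    refine ⟨f (z, t) 0 0, f (z, t) 1 0, ?_⟩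
    ext i j
    fin_cases i <;> fin_cases j <;> simp [h1, h2]

lemma continuous_entry (z : UnitCircle) (t : unitInterval) (i j : Fin 2) :
    Continuous (fun f : WA => f (z, t) i j) := by
  have h : Continuous (fun f : WA => f (z, t)) := continuous_eval_const _
  exact h.matrix_elem i j

lemma wa_closed : IsClosed WallpaperAlg := by
  have : WallpaperAlg = ⋂ z : UnitCircle, ⋂ t : unitInterval, ⋂ _ : (t = 0 ∨ t = 1),
      {f : WA | f (z, t) 0 0 = f (z, t) 1 1 ∧ f (z, t) 0 1 = (z : ℂ) * f (z, t) 1 0} := by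
    ext f
    rw [mem_wa]
    simp only [Set.mem_iInter, Set.mem_ofPred_eq]
  rw [this]
  refine isClosed_iInter fun z => isClosed_iInter fun t => isClosed_iInter fun _ => ?_
  exact (isClosed_eq (continuous_entry _ _ _ _) (continuous_entry _ _ _ _)).inter
    (isClosed_eq (continuous_entry _ _ _ _) (continuous_const.mul (continuous_entry _ _ _ _)))

lemma wa_add {f g : WA} (hf : f ∈ WallpaperAlg) (hg : g ∈ WallpaperAlg) :
    f + g ∈ WallpaperAlg := by
  rw [mem_wa] at *
  intro z t ht
  obtain ⟨h1, h2⟩ := hf z t ht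
  obtain ⟨h3, h4⟩ := hg z t ht
  simp only [ContinuousMap.add_apply, Matrix.add_apply]
  constructor
  · rw [h1, h3]
  · rw [h2, h4]; ring

lemma wa_mul {f g : WA} (hf : f ∈ WallpaperAlg) (hg : g ∈ WallpaperAlg) :
    f * g ∈ WallpaperAlg := by
  rw [mem_wa] at *
  intro z t ht
  obtain ⟨h1, h2⟩ := hf z t ht
  obtain ⟨h3, h4⟩ := hg z t ht
  simp only [ContinuousMap.mul_apply, Matrix.mul_apply, Fin.sum_univ_two]
  constructor
  · rw [h1, h3, h2, h4]; ring
  · rw [h1, h3, h2, h4]; ring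

lemma wa_algebraMap (c : ℂ) : algebraMap ℂ WA c ∈ WallpaperAlg := by
  rw [mem_wa]
  intro z t ht
  simp [Algebra.algebraMap_eq_smul_one]

lemma wa_star {f : WA} (hf : f ∈ WallpaperAlg) : star f ∈ WallpaperAlg := by
  rw [mem_wa] at *
  intro z t ht
  obtain ⟨h1, h2⟩ := hf z t ht
  have hz : (z : ℂ) * star (z : ℂ) = 1 := by
    have := Complex.mul_conj (z : ℂ)
    rw [Complex.normSq_eq_norm_sq, z.2] at this
    simpa using this
  simp only [ContinuousMap.star_apply, Matrix.star_apply]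
  constructor
  · rw [h1]
  · rw [h2, star_mul', ← mul_assoc, hz, one_mul]

noncomputable def waStar : StarSubalgebra ℂ WA where
  carrier := WallpaperAlg
  mul_mem' := wa_mul
  add_mem' := wa_add
  algebraMap_mem' := wa_algebraMap
  star_mem' := wa_star

def pt : Cylinder := (⟨1, by simp⟩, 0)

noncomputable def chi (s : ℂ) (f : WA) : ℂ := f pt 0 0 + s * f pt 0 1

lemma chi_cont (s : ℂ) : Continuous (chi s) :=
  (continuous_entry _ _ _ _).add (continuous_const.mul (continuous_entry _ _ _ _))

lemma chi_add (s : ℂ) (f g : WA) : chi s (f + g) = chi s f + chi s g := by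
  simp [chi]; ring

lemma chi_mul (s : ℂ) (hs : s * s = 1) {f g : WA} (hf : f ∈ WallpaperAlg)
    (hg : g ∈ WallpaperAlg) : chi s (f * g) = chi s f * chi s g := by
  obtain ⟨h1, h2⟩ := (mem_wa f).1 hf ⟨1, by simp⟩ 0 (Or.inl rfl)
  obtain ⟨h3, h4⟩ := (mem_wa g).1 hg ⟨1, by simp⟩ 0 (Or.inl rfl)
  change f pt 0 0 = f pt 1 1 at h1
  change f pt 0 1 = 1 * f pt 1 0 at h2
  change g pt 0 0 = g pt 1 1 at h3
  change g pt 0 1 = 1 * g pt 1 0 at h4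
  rw [one_mul] at h2 h4
  simp only [chi, ContinuousMap.mul_apply, Matrix.mul_apply, Fin.sum_univ_two]
  rw [← h3, ← h4]
  linear_combination (-(f pt 0 1 * g pt 0 1)) * hs

lemma chi_alg (s c : ℂ) : chi s (algebraMap ℂ WA c) = c := by
  simp [chi, Algebra.algebraMap_eq_smul_one]

lemma chi_neg (s : ℂ) (f : WA) : chi s (-f) = - chi s f := by
  simp [chi]; ring

def ker (s : ℂ) : Set WA := {f | f ∈ WallpaperAlg ∧ chi s f = 0}

lemma wa_neg {f : WA} (hf : f ∈ WallpaperAlg) : -f ∈ WallpaperAlg :=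
  neg_mem (s := waStar) (x := f) hf

lemma ker_max (s : ℂ) (hs : s * s = 1) : IsMaxClosedIdealIn WallpaperAlg (ker s) := by
  refine ⟨⟨fun f h => h.1, ⟨?_, ?_⟩, ?_, ?_, ?_, ?_⟩, ?_, ?_⟩
  · simpa using wa_algebraMap 0
  · simpa using chi_alg s 0
  · rintro x ⟨hx, hx'⟩ y ⟨hy, hy'⟩
    exact ⟨wa_add hx hy, by rw [chi_add, hx', hy', add_zero]⟩
  · rintro x ⟨hx, hx'⟩
    exact ⟨wa_neg hx, by rw [chi_neg, hx', neg_zero]⟩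
  · rintro x ⟨hx, hx'⟩ a ha
    exact ⟨⟨wa_mul ha hx, by rw [chi_mul s hs ha hx, hx', mul_zero]⟩,
      ⟨wa_mul hx ha, by rw [chi_mul s hs hx ha, hx', zero_mul]⟩⟩
  · exact wa_closed.inter (isClosed_eq (chi_cont s) continuous_const)
  · intro h
    have h1 : algebraMap ℂ WA 1 ∈ ker s := h ▸ wa_algebraMap 1
    have := h1.2
    rw [chi_alg] at this
    exact one_ne_zero this
  · rintro T ⟨hT, h0, hadd, hneg, hmul, -⟩ hsub
    by_cases hc : T ⊆ ker s
    · exact Or.inl (hc.antisymm hsub)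
    · right
      obtain ⟨g, hgT, hg⟩ := Set.not_subset.1 hc
      have hgA := hT hgT
      have hg0 : chi s g ≠ 0 := fun h => hg ⟨hgA, h⟩
      refine hT.antisymm fun f hf => ?_
      have hk := (hmul g hgT _ (wa_algebraMap (chi s f / chi s g))).1
      set k := algebraMap ℂ WA (chi s f / chi s g) * g with hkdef
      have hkc : chi s k = chi s f := by
        rw [hkdef, chi_mul s hs (wa_algebraMap _) hgA, chi_alg]
        field_simp
      have : f + -k ∈ T := hsub ⟨wa_add hf (wa_neg (hT hk)), by
        rw [chi_add, chi_neg, hkc, add_neg_cancel]⟩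
      simpa using hadd _ this _ hk

def bump : WA where
  toFun p := !![((p.2 : ℝ) : ℂ) * (1 - ((p.2 : ℝ) : ℂ)), 0; 0, 0]
  continuous_toFun := by
    refine continuous_matrix fun i j => ?_
    fin_cases i <;> fin_cases j <;> simp <;> fun_prop

lemma bump_mem : bump ∈ WallpaperAlg := by
  rw [mem_wa]
  rintro z t (rfl | rfl) <;> simp [bump]

lemma center_zero {f : WA} (hf : f ∈ centerIn WallpaperAlg) : f pt 0 1 = 0 := by
  have hcl : IsClosed {t : unitInterval | f (⟨1, by simp⟩, t) 0 1 = 0} := by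
    refine isClosed_eq ?_ continuous_const
    have : Continuous fun t : unitInterval => f (⟨1, by simp⟩, t) := by fun_prop
    exact this.matrix_elem 0 1
  have hd : Dense ({0, 1}ᶜ : Set unitInterval) := by
    have : ∀ x : unitInterval, (nhdsWithin x {x}ᶜ).NeBot := fun x => inferInstance
    simpa [Set.compl_eq_univ_diff] using dense_univ.diff_finite (Set.toFinite ({0, 1} : Set unitInterval))
  have hsub : ({0, 1}ᶜ : Set unitInterval) ⊆ {t | f (⟨1, by simp⟩, t) 0 1 = 0} := by
    intro t ht
    have ht' : t ≠ 0 ∧ t ≠ 1 := by simpa using ht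
    have h := congrArg (fun g : WA => g (⟨1, by simp⟩, t) 0 1) (hf.2 bump bump_mem)
    simp [bump, Matrix.mul_apply, Fin.sum_univ_two] at h
    rcases h with (h | h) | h
    · exact absurd h ht'.1
    · exfalso
      apply ht'.2
      ext
      have h' : ((t : ℝ) : ℂ) = 1 := (sub_eq_zero.1 h).symm
      exact_mod_cast h'
    · exact h
  have := hd.closure_eq ▸ closure_minimal hsub hcl
  exact this (Set.mem_univ 0)

def sep : WA where
  toFun p := !![1, -(p.1 : ℂ); -1, 1]
  continuous_toFun := by
    refine continuous_matrix fun i j => ?_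
    fin_cases i <;> fin_cases j <;> simp <;> fun_prop

lemma sep_mem : sep ∈ WallpaperAlg := by
  rw [mem_wa]
  intro z t _
  simp [sep]

/-- **The wallpaper-group C*-algebra is not weakly central.**
The set `A = {f ∈ C(𝕋 × [0,1], M₂(ℂ)) : f(z,t) = [[a, z·b],[b, a]] for t ∈ {0,1}}` is a
unital C*-subalgebra of `C(𝕋 × [0,1], M₂(ℂ))`, and it is not weakly central. -/
theorem wallpaperAlg_not_weaklyCentral :
    (∃ S : StarSubalgebra ℂ C(Cylinder, Matrix (Fin 2) (Fin 2) ℂ),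
        (S : Set C(Cylinder, Matrix (Fin 2) (Fin 2) ℂ)) = WallpaperAlg ∧
        IsClosed WallpaperAlg) ∧
    ¬ WeaklyCentralIn WallpaperAlg := by
  refine ⟨⟨waStar, rfl, wa_closed⟩, fun h => ?_⟩
  have hE := h.2 (ker 1) (ker (-1)) (ker_max 1 (by norm_num)) (ker_max (-1) (by norm_num)) (by
    ext f
    constructor
    · rintro ⟨⟨h1, h2⟩, h3⟩
      refine ⟨⟨h1, ?_⟩, h3⟩
      have := center_zero h3
      simp only [chi, this] at h2 ⊢
      simpa using h2
    · rintro ⟨⟨h1, h2⟩, h3⟩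
      refine ⟨⟨h1, ?_⟩, h3⟩
      have := center_zero h3
      simp only [chi, this] at h2 ⊢
      simpa using h2)
  have h1 : sep ∈ ker 1 := ⟨sep_mem, by simp [chi, sep, pt]⟩
  rw [hE] at h1
  have h2 := h1.2
  simp [chi, sep, pt] at h2
end

section
/- Let 𝕋 ⊆ ℂ be the unit circle and let A = {f ∈ C(𝕋 × [0,1], M₂(ℂ)) : for every z ∈ 𝕋 and t ∈ {0,1} there exist a, b ∈ ℂ with f(z,t) = [[a, z·b],[b, a]]}. Then the center of A consists exactly of the scalar-valued elements: Z(A) = {f ∈ A : for every (z,t) ∈ 𝕋 × [0,1], f(z,t) is a scalar multiple of the 2×2 identity matrix}. -/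
lemma wp_aux (h : Cylinder → ℂ) (hc : Continuous h)
    (h0 : ∀ q : Cylinder, ((q.2 : ℝ) : ℂ) * (1 - ((q.2 : ℝ) : ℂ)) * h q = 0) (q : Cylinder) :
    h q = 0 := by
  obtain ⟨z, t, ht⟩ := q
  let k : ℝ → ℂ := fun s => h (z, Set.projIcc 0 1 zero_le_one s)
  have hk : Continuous k := hc.comp (continuous_const.prodMk continuous_projIcc)
  have e : Set.EqOn k (fun _ => 0) (Set.Ioo (0 : ℝ) 1) := by
    intro s hs
    have hs' : s ∈ Set.Icc (0 : ℝ) 1 := ⟨hs.1.le, hs.2.le⟩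
    have h1 := h0 (z, ⟨s, hs'⟩)
    have h2 : (s : ℂ) ≠ 0 := by exact_mod_cast hs.1.ne'
    have h3 : (1 - (s : ℂ)) ≠ 0 := by
      rw [sub_ne_zero]
      exact_mod_cast hs.2.ne'
    have h4 : h (z, ⟨s, hs'⟩) = 0 := by
      rcases mul_eq_zero.mp h1 with h5 | h5
      · exact absurd h5 (mul_ne_zero h2 h3)
      · exact h5
    simp only [k]
    rw [Set.projIcc_of_mem _ hs']
    exact h4
  have e2 := e.closure hk continuous_const
  rw [closure_Ioo zero_ne_one] at e2
  have := e2 ht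
  simp only [k] at this
  rwa [Set.projIcc_of_mem _ ht] at this

/-- test elements `t(1-t) M` -/
noncomputable def wpTest (M : Matrix (Fin 2) (Fin 2) ℂ) : C(Cylinder, Matrix (Fin 2) (Fin 2) ℂ) where
  toFun q := (((q.2 : ℝ) : ℂ) * (1 - ((q.2 : ℝ) : ℂ))) • M
  continuous_toFun := by fun_prop

lemma wpTest_mem (M : Matrix (Fin 2) (Fin 2) ℂ) : wpTest M ∈ WallpaperAlg := by
  intro z t ht
  refine ⟨0, 0, ?_⟩
  have : wpTest M (z, t) = 0 := by
    rcases ht with rfl | rfl <;> simp [wpTest]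
  rw [this]
  ext i j
  fin_cases i <;> fin_cases j <;> simp

theorem center_wallpaperAlg :
    centerIn WallpaperAlg =
      {f ∈ WallpaperAlg | ∀ q : Cylinder,
        ∃ c : ℂ, f q = c • (1 : Matrix (Fin 2) (Fin 2) ℂ)} := by
  ext f
  constructor
  · rintro ⟨hf, hc⟩
    refine ⟨hf, fun q => ⟨f q 0 0, ?_⟩⟩
    have key : ∀ (M : Matrix (Fin 2) (Fin 2) ℂ) (i j : Fin 2) (q : Cylinder),
        (f q * M - M * f q) i j = 0 := by
      intro M i j
      apply wp_aux (fun q => (f q * M - M * f q) i j)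
      · have := f.continuous
        exact Continuous.matrix_elem (by fun_prop) i j
      · intro q
        have h1 := congrArg (fun g : C(Cylinder, Matrix (Fin 2) (Fin 2) ℂ) => g q i j)
          (hc _ (wpTest_mem M))
        simp only [ContinuousMap.mul_apply, wpTest, ContinuousMap.coe_mk, Matrix.mul_smul,
          Matrix.smul_mul, Matrix.smul_apply, smul_eq_mul] at h1
        rw [Matrix.sub_apply, mul_sub, h1, sub_self]
    have a1 := key !![0, 1; 0, 0] 0 0 q
    have a2 := key !![0, 1; 0, 0] 0 1 q
    have a3 := key !![0, 0; 1, 0] 0 0 q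
    simp [Matrix.sub_apply, Matrix.mul_apply, Matrix.vecMul, dotProduct, Fin.sum_univ_two] at a1 a2 a3
    ext i j
    fin_cases i <;> fin_cases j <;> simp
    · linear_combination a3
    · first | linear_combination a1 | linear_combination -a1
    · linear_combination -a2
  · rintro ⟨hf, hs⟩
    refine ⟨hf, fun a _ => ?_⟩
    ext1 q
    obtain ⟨c, hq⟩ := hs q
    simp [hq]
end

section
/- Let B be a finite-dimensional C*-algebra over ℂ and let J be a two-sided ideal of B. Then B has the center quotient property with respect to J: for every x ∈ B such that x*b − b*x ∈ J for all b ∈ B, there exists z in the center Z(B) of B with x − z ∈ J. -/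
theorem aux_selfAdjoint_nilpotent {B : Type*} [NormedRing B] [StarRing B] [CStarRing B]
    (k : ℕ) : ∀ a : B, star a = a → a ^ (2 ^ k) = 0 → a = 0 := by
  induction k with
  | zero => intro a _ h; simpa using h
  | succ k ih =>
    intro a ha h
    have h2 : a * a = 0 := by
      apply ih (a * a)
      · rw [star_mul, ha]
      · rw [← pow_two, ← pow_mul, ← h]; congr 1; ring
    rw [← CStarRing.star_mul_self_eq_zero_iff, ha, h2]

theorem aux_semisimple {B : Type*} [NormedRing B] [StarRing B] [CStarRing B]
    [NormedAlgebra ℂ B] [FiniteDimensional ℂ B] : IsSemisimpleRing B := by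
  have : IsArtinianRing B := IsArtinianRing.of_finite ℂ B
  rw [IsArtinianRing.isSemisimpleRing_iff_jacobson, eq_bot_iff]
  intro a ha
  obtain ⟨n, hn⟩ := IsSemiprimaryRing.isNilpotent (R := B)
  have h1 : star a * a ∈ Ring.jacobson B := Ideal.mul_mem_left _ _ ha
  have h2 : (star a * a) ^ n = 0 := by
    have := Ideal.pow_mem_pow h1 n
    rw [hn] at this
    simpa using this
  have h3 : star a * a = 0 := by
    apply aux_selfAdjoint_nilpotent n _ (by simp)
    exact pow_eq_zero_of_le (Nat.lt_two_pow_self).le h2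
  exact (CStarRing.star_mul_self_eq_zero_iff a).1 h3

/-- **Finite-dimensional C*-algebras have the center quotient property.**
If `B` is a finite-dimensional C*-algebra and `J` a two-sided ideal of `B`, then every
`x ∈ B` which is central modulo `J` is congruent modulo `J` to an element of the center
`Z(B)`. -/
theorem finiteDimensional_center_quotient_property
    {B : Type*} [NormedRing B] [StarRing B] [CStarRing B]
    [NormedAlgebra ℂ B] [StarModule ℂ B] [FiniteDimensional ℂ B]
    (J : TwoSidedIdeal B)
    (x : B) (hx : ∀ b : B, x * b - b * x ∈ J) :
    ∃ z : B, (∀ b : B, z * b = b * z) ∧ x - z ∈ J := by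
  have := aux_semisimple (B := B)
  obtain ⟨K, hK⟩ := exists_isCompl (TwoSidedIdeal.asIdeal J)
  have h1 : (1 : B) ∈ TwoSidedIdeal.asIdeal J ⊔ K := by rw [hK.sup_eq_top]; trivial
  obtain ⟨e, he, f, hf, hef⟩ := Submodule.mem_sup.1 h1
  rw [TwoSidedIdeal.mem_asIdeal] at he
  have hr : ∀ j ∈ J, j * e = j := by
    intro j hj
    have h2 : j * f = j - j * e := by rw [eq_sub_iff_add_eq, ← mul_add, add_comm, hef, mul_one]
    have h3 : j * f ∈ TwoSidedIdeal.asIdeal J := by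
      rw [TwoSidedIdeal.mem_asIdeal]; exact J.mul_mem_right _ _ hj
    have h4 : j * f ∈ K := K.smul_mem j hf
    have h5 : j * f = 0 := Submodule.disjoint_def.1 hK.disjoint _ h3 h4
    rw [h5] at h2
    exact (sub_eq_zero.1 h2.symm).symm
  have hee : e * e = e := hr e he
  have h6 : ∀ b, e * b * e = e * b := fun b => hr _ (J.mul_mem_right _ _ he)
  have h7 : ∀ b, b * e = e * b * e := by
    intro b
    rw [← sub_eq_zero]
    set n := b * e - e * b * e with hn
    have hen : e * n = 0 := by
      rw [hn, mul_sub, ← mul_assoc, ← mul_assoc, ← mul_assoc, hee, sub_self]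
    have hne : n * e = n := by
      rw [hn, sub_mul, mul_assoc b, mul_assoc (e * b), hee]
    have h8 : n * star n * n = 0 := by
      calc n * star n * n = n * (e * star n * e) * n := by
            rw [h6, ← mul_assoc, hne]
        _ = n * (e * star n) * (e * n) := by simp only [mul_assoc]
        _ = 0 := by rw [hen, mul_zero]
    have h9 : star n * n = 0 := by
      rw [← CStarRing.star_mul_self_eq_zero_iff]
      calc star (star n * n) * (star n * n) = star n * (n * star n * n) := by
            simp only [star_mul, star_star, mul_assoc]
        _ = 0 := by rw [h8, mul_zero]
    exact (CStarRing.star_mul_self_eq_zero_iff n).1 h9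
  have hc : ∀ b, e * b = b * e := fun b => by rw [h7 b, h6 b]
  refine ⟨x - x * e, fun b => ?_, ?_⟩
  · have h10 := hr _ (hx b)
    rw [sub_mul] at h10
    rw [sub_mul, mul_sub, mul_assoc x, hc b, ← mul_assoc, ← mul_assoc, sub_eq_sub_iff_sub_eq_sub]
    exact h10.symm
  · rw [sub_sub_cancel]
    exact J.mul_mem_left _ _ he
end

section
/- Let B be a finite-dimensional C*-algebra over ℂ and let J be a two-sided ideal of B. Then J has a multiplicative unit e (an element e ∈ J with e*y = y*e = y for all y ∈ J), this e is a self-adjoint idempotent lying in the center of B, and the map b ↦ (b*e, b + J) is a *-algebra isomorphism from B onto the product C*-algebra J × (B/J). -/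
/-- **Ideals of finite-dimensional C*-algebras are unital direct summands.**
Let `B` be a finite-dimensional C*-algebra and `J` a two-sided ideal of `B`.  Then `J` has
a multiplicative unit `e`, which is a self-adjoint central idempotent of `B`, the ideal `J`
is closed under `star`, and the map `b ↦ (b·e, b + J)` is a *-algebra isomorphism of `B`
onto the product `J × (B/J)`: it is bijective, and (the second component being the
canonical quotient ring homomorphism) it is multiplicative, `star`-preserving and linear in
the first component. -/
theorem ideal_of_finiteDimensional_is_unital_summand
    {B : Type*} [NormedRing B] [StarRing B] [CStarRing B]
    [NormedAlgebra ℂ B] [StarModule ℂ B] [FiniteDimensional ℂ B]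
    (J : TwoSidedIdeal B) :
    ∃ e : B, ∃ he : e ∈ J,
      (∀ y ∈ J, e * y = y ∧ y * e = y) ∧
      star e = e ∧
      e * e = e ∧
      (∀ b : B, e * b = b * e) ∧
      (∀ y ∈ J, star y ∈ J) ∧
      Function.Bijective (fun b : B =>
        ((⟨b * e, J.mul_mem_left b e he⟩ : J), (b : J.ringCon.Quotient))) ∧
      (∀ a b : B, (a * b) * e = (a * e) * (b * e)) ∧
      (∀ b : B, star b * e = star (b * e)) ∧
      (∀ (c : ℂ) (b : B), (c • b) * e = c • (b * e)) := by
  haveI : IsSemisimpleRing B := aux_semisimple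
  obtain ⟨e, hee, hJ⟩ := IsSemisimpleRing.ideal_eq_span_idempotent (TwoSidedIdeal.asIdeal J)
  have hmem : ∀ y, y ∈ J ↔ ∃ a, a * e = y := fun y => by
    rw [← TwoSidedIdeal.mem_asIdeal, hJ, Ideal.mem_span_singleton']
  have hee : e * e = e := hee
  have he : e ∈ J := (hmem e).2 ⟨1, one_mul e⟩
  have hr : ∀ y ∈ J, y * e = y := by
    intro y hy
    obtain ⟨a, rfl⟩ := (hmem y).1 hy
    rw [mul_assoc, hee]
  have hl : ∀ y ∈ J, e * y = y := by
    intro y hy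
    have hz : y - e * y ∈ J := J.sub_mem hy (J.mul_mem_left _ _ hy)
    have hez : e * (y - e * y) = 0 := by rw [mul_sub, ← mul_assoc, hee, sub_self]
    generalize hzd : y - e * y = z at hz hez
    have h1 : z * star z * z = 0 := by
      rw [← hr _ (J.mul_mem_right z (star z) hz), mul_assoc, hez, mul_zero]
    have h2 : star (star z * z) * (star z * z) = 0 := by
      rw [star_mul, star_star, mul_assoc, ← mul_assoc z, h1, mul_zero]
    rw [CStarRing.star_mul_self_eq_zero_iff, CStarRing.star_mul_self_eq_zero_iff] at h2
    rw [h2] at hzd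
    exact (sub_eq_zero.1 hzd).symm
  have hc : ∀ b : B, e * b = b * e := fun b => by
    rw [← hr _ (J.mul_mem_right e b he), mul_assoc, hl _ (J.mul_mem_left b e he)]
  have hs : star e = e := by
    have h1 : (e - e * star e) * star (e - e * star e) = 0 := by
      have : e * (star e - e * star e) = 0 := by rw [mul_sub, ← mul_assoc, hee, sub_self]
      rw [star_sub, star_mul, star_star]
      have h3 : e - e * star e = (1 - star e) * e := by rw [sub_mul, one_mul, hc]
      rw [h3, mul_assoc, this, mul_zero]
    rw [CStarRing.mul_star_self_eq_zero_iff, sub_eq_zero] at h1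
    rw [h1, star_mul, star_star]
  refine ⟨e, he, fun y hy => ⟨hl y hy, hr y hy⟩, hs, hee, hc, ?_, ⟨?_, ?_⟩, ?_, ?_, ?_⟩
  · intro y hy
    rw [← hl y hy, star_mul, hs]
    exact J.mul_mem_left _ _ he
  · intro a b hab
    simp only [Prod.mk.injEq, Subtype.mk.injEq] at hab
    obtain ⟨h1, h2⟩ := hab
    rw [RingCon.eq, TwoSidedIdeal.rel_iff] at h2
    have h3 := hr _ h2
    rw [sub_mul, h1, sub_self] at h3
    exact sub_eq_zero.1 h3.symm
  · rintro ⟨⟨y, hy⟩, q⟩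
    obtain ⟨c, rfl⟩ := Quot.exists_rep q
    refine ⟨y + (c - c * e), ?_⟩
    refine Prod.ext (Subtype.ext ?_) ?_
    · change (y + (c - c * e)) * e = y
      rw [add_mul, sub_mul, mul_assoc, hee, sub_self, add_zero, hr y hy]
    · change ((y + (c - c * e) : B) : J.ringCon.Quotient) = (c : J.ringCon.Quotient)
      rw [RingCon.eq, TwoSidedIdeal.rel_iff]
      have : y + (c - c * e) - c = y - c * e := by abel
      rw [this]
      exact J.sub_mem hy (J.mul_mem_left _ _ he)
  · intro a b
    rw [mul_assoc a e, ← mul_assoc e b, hc b, mul_assoc b, hee, mul_assoc]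
  · intro b
    rw [star_mul, hs, hc]
  · intro c b
    exact smul_mul_assoc c b e
end
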